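/- arXiv:1906.00828 — 3 statements merged into one kernel-verified Lean document; each statement's English description precedes it below -/
import Mathlib

section
/- Let L, B > 0 and Ω = (0,L) × (−B,B). For a smooth function u on [0,L] × [−B,B] × [0,T] define ‖u‖_{X_T} = sup_{t∈[0,T]} ‖u(·,t)‖_{H²(Ω)} + sup_{t∈[0,T]} ‖u_t(·,t)‖_{L²(Ω)} + (∫₀^T ‖∇u_t(·,t)‖²_{L²(Ω)} dt)^{1/2}. There exists a constant C > 0 depending only on Ω such that for all T > 0, R > 0 and all smooth functions u, v on [0,L] × [−B,B] × [0,T] that vanish on ∂Ω for every t and satisfy ‖u‖_{X_T} ≤ R and ‖v‖_{X_T} ≤ R, one has ∫₀^T ‖(u²u_x − v²v_x)(·,t)‖_{L²(Ω)} dt + ∫₀^T ‖∂_t(u²u_x − v²v_x)(·,t)‖_{L²(Ω)} dt ≤ C (T^{1/2} + T) R² ‖u − v‖_{X_T}. -/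
/-! The proof writes `w = u - v` and `K = 2BL`. Because `u` vanishes on the left and bottom sides,
`u(x,y) = ∫₀ˣ ∫_{-B}^y u_xy`, which gives the Agmon-type bound `‖u‖_∞² ≤ K ‖u_xy‖²`
(`SliceBound.sq_le`). The products `u_t u_x` that arise from the time derivative would usually be
handled by Hölder and `H¹ ⊂ L⁴`; here a mixed-norm argument replaces it: `u_t²` is
bounded by `L ∫ u_tx² dx`, a function of `y`, and `u_x²` by `2B ∫ u_xy² dy`, a function of `x`, so
that `‖u_t u_x‖² ≤ K ‖u_tx‖² ‖u_xy‖²` (`SliceBound.prod_le`). Only the vanishing of `u_t` on the left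
side and of `u_x` on the bottom side is needed, and both follow from the boundary condition.

At a fixed time these two bounds and the expansions
`u²u_x - v²v_x = u²w_x + (u+v)wv_x` and
`∂ₜ(u²u_x - v²v_x) = 2wu_tu_x + 2vw_tu_x + 2vv_tw_x + u²w_tx + (u+v)wv_tx`
give `l2norm_nonlin_le` and `l2norm_pdt_nonlin_le`. Integration in time yields the factor `T` for the
first, and `T^{1/2}` for the second by Cauchy–Schwarz (`integral_grad_le`). -/

open MeasureTheory Real Set

/-- Partial derivative in `x` of a function `u = u(x,y,t)`. -/
noncomputable def pdx (u : ℝ → ℝ → ℝ → ℝ) (x y t : ℝ) : ℝ := deriv (fun x' => u x' y t) x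

/-- Partial derivative in `y` of a function `u = u(x,y,t)`. -/
noncomputable def pdy (u : ℝ → ℝ → ℝ → ℝ) (x y t : ℝ) : ℝ := deriv (fun y' => u x y' t) y

/-- Partial derivative in `t` of a function `u = u(x,y,t)`. -/
noncomputable def pdt (u : ℝ → ℝ → ℝ → ℝ) (x y t : ℝ) : ℝ := deriv (fun t' => u x y t') t

/-- Partial derivative in the first variable of a function of two real variables. -/
noncomputable def qdx (w : ℝ → ℝ → ℝ) (x y : ℝ) : ℝ := deriv (fun x' => w x' y) x

/-- Partial derivative in the second variable of a function of two real variables. -/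
noncomputable def qdy (w : ℝ → ℝ → ℝ) (x y : ℝ) : ℝ := deriv (fun y' => w x y') y

/-- `L²(Ω)` norm of a function on the rectangle `Ω = (0,L) × (-B,B)`. -/
noncomputable def l2norm (L B : ℝ) (w : ℝ → ℝ → ℝ) : ℝ :=
  Real.sqrt (∫ x in (0:ℝ)..L, ∫ y in (-B)..B, (w x y) ^ 2)

/-- `H²(Ω)` norm of a function on the rectangle `Ω = (0,L) × (-B,B)`. -/
noncomputable def h2norm (L B : ℝ) (w : ℝ → ℝ → ℝ) : ℝ :=
  Real.sqrt (∫ x in (0:ℝ)..L, ∫ y in (-B)..B,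
    ((w x y) ^ 2 + (qdx w x y) ^ 2 + (qdy w x y) ^ 2
      + (qdx (qdx w) x y) ^ 2 + (qdy (qdx w) x y) ^ 2 + (qdy (qdy w) x y) ^ 2))

/-- The norm of the space `X_T`:
`‖u‖_{X_T} = sup_t ‖u(t)‖_{H²} + sup_t ‖u_t(t)‖_{L²} + (∫₀ᵀ ‖∇u_t(t)‖²_{L²} dt)^{1/2}`. -/
noncomputable def XTnorm (L B T : ℝ) (u : ℝ → ℝ → ℝ → ℝ) : ℝ :=
  (⨆ t : Set.Icc (0:ℝ) T, h2norm L B (fun x y => u x y (t : ℝ)))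
  + (⨆ t : Set.Icc (0:ℝ) T, l2norm L B (fun x y => pdt u x y (t : ℝ)))
  + Real.sqrt (∫ t in (0:ℝ)..T, ∫ x in (0:ℝ)..L, ∫ y in (-B)..B,
      ((pdx (pdt u) x y t) ^ 2 + (pdy (pdt u) x y t) ^ 2))

/-- Joint smoothness of a function of `(x, y, t)` on all of `ℝ³`. -/
def Smooth3 (u : ℝ → ℝ → ℝ → ℝ) : Prop :=
  ContDiff ℝ (⊤ : ℕ∞) (fun p : ℝ × ℝ × ℝ => u p.1 p.2.1 p.2.2)

/-- Iterated integral over the rectangle `(0,L) × (-B,B)`. -/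
noncomputable def rint (L B : ℝ) (f : ℝ → ℝ → ℝ) : ℝ :=
  ∫ x in (0:ℝ)..L, ∫ y in (-B)..B, f x y

/-! ### Calculus of the partial derivatives -/

section Smoothness

variable {u v : ℝ → ℝ → ℝ → ℝ}

lemma Smooth3.hasFDerivAt (hu : Smooth3 u) (p : ℝ × ℝ × ℝ) :
    HasFDerivAt (fun p : ℝ × ℝ × ℝ => u p.1 p.2.1 p.2.2)
      (fderiv ℝ (fun p : ℝ × ℝ × ℝ => u p.1 p.2.1 p.2.2) p) p :=
  (ContDiff.differentiable hu (by simp)).differentiableAt.hasFDerivAt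

lemma Smooth3.hasDerivAt_x' (hu : Smooth3 u) (x y t : ℝ) :
    HasDerivAt (fun x' => u x' y t)
      (fderiv ℝ (fun p : ℝ × ℝ × ℝ => u p.1 p.2.1 p.2.2) (x, y, t) (1, 0, 0)) x :=
  (hu.hasFDerivAt (x, y, t)).comp_hasDerivAt (f := fun x' : ℝ => (x', y, t)) x
    ((hasDerivAt_id x).prodMk ((hasDerivAt_const x y).prodMk (hasDerivAt_const x t)))

lemma Smooth3.hasDerivAt_y' (hu : Smooth3 u) (x y t : ℝ) :
    HasDerivAt (fun y' => u x y' t)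
      (fderiv ℝ (fun p : ℝ × ℝ × ℝ => u p.1 p.2.1 p.2.2) (x, y, t) (0, 1, 0)) y :=
  (hu.hasFDerivAt (x, y, t)).comp_hasDerivAt (f := fun y' : ℝ => (x, y', t)) y
    ((hasDerivAt_const y x).prodMk ((hasDerivAt_id y).prodMk (hasDerivAt_const y t)))

lemma Smooth3.hasDerivAt_t' (hu : Smooth3 u) (x y t : ℝ) :
    HasDerivAt (fun t' => u x y t')
      (fderiv ℝ (fun p : ℝ × ℝ × ℝ => u p.1 p.2.1 p.2.2) (x, y, t) (0, 0, 1)) t :=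
  (hu.hasFDerivAt (x, y, t)).comp_hasDerivAt (f := fun t' : ℝ => (x, y, t')) t
    ((hasDerivAt_const t x).prodMk ((hasDerivAt_const t y).prodMk (hasDerivAt_id t)))

lemma Smooth3.hasDerivAt_x (hu : Smooth3 u) (x y t : ℝ) :
    HasDerivAt (fun x' => u x' y t) (pdx u x y t) x :=
  (hu.hasDerivAt_x' x y t).differentiableAt.hasDerivAt

lemma Smooth3.hasDerivAt_y (hu : Smooth3 u) (x y t : ℝ) :
    HasDerivAt (fun y' => u x y' t) (pdy u x y t) y :=
  (hu.hasDerivAt_y' x y t).differentiableAt.hasDerivAt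

lemma Smooth3.hasDerivAt_t (hu : Smooth3 u) (x y t : ℝ) :
    HasDerivAt (fun t' => u x y t') (pdt u x y t) t :=
  (hu.hasDerivAt_t' x y t).differentiableAt.hasDerivAt

lemma Smooth3.fderiv_apply (hu : Smooth3 u) (e : ℝ × ℝ × ℝ) :
    Smooth3 (fun x y t => fderiv ℝ (fun p : ℝ × ℝ × ℝ => u p.1 p.2.1 p.2.2) (x, y, t) e) := by
  have h : ContDiff ℝ (⊤ : ℕ∞) (fderiv ℝ (fun p : ℝ × ℝ × ℝ => u p.1 p.2.1 p.2.2)) :=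
    ContDiff.fderiv_right hu (by norm_cast)
  exact h.clm_apply contDiff_const

lemma Smooth3.pdx_eq (hu : Smooth3 u) : pdx u = fun x y t =>
    fderiv ℝ (fun p : ℝ × ℝ × ℝ => u p.1 p.2.1 p.2.2) (x, y, t) (1, 0, 0) := by
  funext x y t; exact (hu.hasDerivAt_x' x y t).deriv

lemma Smooth3.pdy_eq (hu : Smooth3 u) : pdy u = fun x y t =>
    fderiv ℝ (fun p : ℝ × ℝ × ℝ => u p.1 p.2.1 p.2.2) (x, y, t) (0, 1, 0) := by
  funext x y t; exact (hu.hasDerivAt_y' x y t).deriv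

lemma Smooth3.pdt_eq (hu : Smooth3 u) : pdt u = fun x y t =>
    fderiv ℝ (fun p : ℝ × ℝ × ℝ => u p.1 p.2.1 p.2.2) (x, y, t) (0, 0, 1) := by
  funext x y t; exact (hu.hasDerivAt_t' x y t).deriv

lemma Smooth3.pdx (hu : Smooth3 u) : Smooth3 (pdx u) := hu.pdx_eq ▸ hu.fderiv_apply _
lemma Smooth3.pdy (hu : Smooth3 u) : Smooth3 (pdy u) := hu.pdy_eq ▸ hu.fderiv_apply _
lemma Smooth3.pdt (hu : Smooth3 u) : Smooth3 (pdt u) := hu.pdt_eq ▸ hu.fderiv_apply _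

lemma Smooth3.sub (hu : Smooth3 u) (hv : Smooth3 v) : Smooth3 (fun x y t => u x y t - v x y t) :=
  ContDiff.sub hu hv

lemma Smooth3.mul (hu : Smooth3 u) (hv : Smooth3 v) : Smooth3 (fun x y t => u x y t * v x y t) :=
  ContDiff.mul hu hv

lemma Smooth3.sq (hu : Smooth3 u) : Smooth3 (fun x y t => u x y t ^ 2) :=
  ContDiff.pow hu 2

lemma Smooth3.continuous (hu : Smooth3 u) :
    Continuous (fun p : ℝ × ℝ × ℝ => u p.1 p.2.1 p.2.2) := ContDiff.continuous hu

lemma Smooth3.cont_xy (hu : Smooth3 u) (t : ℝ) :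
    Continuous (fun p : ℝ × ℝ => u p.1 p.2 t) :=
  hu.continuous.comp (by fun_prop : Continuous fun p : ℝ × ℝ => (p.1, p.2, t))

lemma Smooth3.cont_x (hu : Smooth3 u) (y t : ℝ) : Continuous (fun x => u x y t) :=
  hu.continuous.comp (by fun_prop : Continuous fun x : ℝ => (x, y, t))

lemma Smooth3.cont_y (hu : Smooth3 u) (x t : ℝ) : Continuous (fun y => u x y t) :=
  hu.continuous.comp (by fun_prop : Continuous fun y : ℝ => (x, y, t))

/-- Symmetry of the mixed second derivatives in `x` and `t`. -/
lemma Smooth3.pdt_pdx (hu : Smooth3 u) : _root_.pdt (_root_.pdx u) = _root_.pdx (_root_.pdt u) := by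
  funext x y t
  have h2 : DifferentiableAt ℝ (fderiv ℝ (fun p : ℝ × ℝ × ℝ => u p.1 p.2.1 p.2.2)) (x, y, t) :=
    (ContDiff.differentiable (ContDiff.fderiv_right (m := (⊤ : ℕ∞)) hu (by norm_cast))
      (by simp)).differentiableAt
  have key : ∀ e : ℝ × ℝ × ℝ, HasFDerivAt (fun p : ℝ × ℝ × ℝ =>
      fderiv ℝ (fun p : ℝ × ℝ × ℝ => u p.1 p.2.1 p.2.2) (p.1, p.2.1, p.2.2) e)
      ((fderiv ℝ (fderiv ℝ (fun p : ℝ × ℝ × ℝ => u p.1 p.2.1 p.2.2)) (x, y, t)).flip e)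
      (x, y, t) := fun e => by
    simpa using h2.hasFDerivAt.clm_apply (hasFDerivAt_const e (x, y, t))
  rw [hu.pdx.pdt_eq, hu.pdt.pdx_eq, hu.pdx_eq, hu.pdt_eq]
  simp only
  rw [(key _).fderiv, (key _).fderiv]
  simp only [ContinuousLinearMap.flip_apply]
  exact (ContDiffAt.isSymmSndFDerivAt (n := (⊤ : ℕ∞)) (ContDiff.contDiffAt hu)
    (by simpa using WithTop.coe_le_coe.2 (le_top : (2 : ℕ∞) ≤ ⊤))) _ _

lemma Smooth3.pdx_sub (hu : Smooth3 u) (hv : Smooth3 v) (x y t : ℝ) :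
    _root_.pdx (fun x y t => u x y t - v x y t) x y t = _root_.pdx u x y t - _root_.pdx v x y t :=
  ((hu.hasDerivAt_x x y t).sub (hv.hasDerivAt_x x y t)).deriv

lemma Smooth3.pdt_sub (hu : Smooth3 u) (hv : Smooth3 v) :
    _root_.pdt (fun x y t => u x y t - v x y t) =
      fun x y t => _root_.pdt u x y t - _root_.pdt v x y t := by
  funext x y t
  exact ((hu.hasDerivAt_t x y t).sub (hv.hasDerivAt_t x y t)).deriv

lemma Smooth3.pdt_sq_mul_pdx (hu : Smooth3 u) (x y t : ℝ) :
    HasDerivAt (fun t' => u x y t' ^ 2 * _root_.pdx u x y t')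
      (2 * u x y t * _root_.pdt u x y t * _root_.pdx u x y t
        + u x y t ^ 2 * _root_.pdx (_root_.pdt u) x y t) t := by
  have h := ((hu.hasDerivAt_t x y t).pow 2).mul (hu.pdx.hasDerivAt_t x y t)
  rw [hu.pdt_pdx] at h
  exact h.congr_deriv (by simp)

end Smoothness

/-! ### Integration over the rectangle and one-dimensional inequalities -/

section Integrals

variable {L B : ℝ} {f g : ℝ → ℝ → ℝ}

lemma continuous_inner_integral (hf : Continuous (fun p : ℝ × ℝ => f p.1 p.2)) (a b : ℝ) :
    Continuous (fun x => ∫ y in a..b, f x y) :=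
  intervalIntegral.continuous_parametric_intervalIntegral_of_continuous' hf a b

lemma Continuous.fst_slice (hf : Continuous (fun p : ℝ × ℝ => f p.1 p.2)) (x : ℝ) :
    Continuous (f x) :=
  hf.comp (by fun_prop : Continuous fun y : ℝ => (x, y))

lemma rint_mono (hL : 0 ≤ L) (hB : 0 ≤ B) (hf : Continuous (fun p : ℝ × ℝ => f p.1 p.2))
    (hg : Continuous (fun p : ℝ × ℝ => g p.1 p.2))
    (h : ∀ x ∈ Icc 0 L, ∀ y ∈ Icc (-B) B, f x y ≤ g x y) : rint L B f ≤ rint L B g := by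
  refine intervalIntegral.integral_mono_on hL ((continuous_inner_integral hf _ _).intervalIntegrable _ _)
    ((continuous_inner_integral hg _ _).intervalIntegrable _ _) fun x hx => ?_
  exact intervalIntegral.integral_mono_on (by linarith)
    ((hf.fst_slice x).intervalIntegrable _ _) ((hg.fst_slice x).intervalIntegrable _ _) (h x hx)

lemma rint_nonneg (hL : 0 ≤ L) (hB : 0 ≤ B) (h : ∀ x y, 0 ≤ f x y) : 0 ≤ rint L B f :=
  intervalIntegral.integral_nonneg hL fun x _ =>
    intervalIntegral.integral_nonneg (by linarith) fun y _ => h x y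

lemma rint_add (hf : Continuous (fun p : ℝ × ℝ => f p.1 p.2))
    (hg : Continuous (fun p : ℝ × ℝ => g p.1 p.2)) :
    rint L B (fun x y => f x y + g x y) = rint L B f + rint L B g := by
  unfold rint
  rw [← intervalIntegral.integral_add ((continuous_inner_integral hf _ _).intervalIntegrable _ _)
    ((continuous_inner_integral hg _ _).intervalIntegrable _ _)]
  congr 1; funext x
  exact intervalIntegral.integral_add
    ((hf.fst_slice x).intervalIntegrable _ _) ((hg.fst_slice x).intervalIntegrable _ _)

lemma rint_const_mul (c : ℝ) :
    rint L B (fun x y => c * f x y) = c * rint L B f := by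
  simp [rint, intervalIntegral.integral_const_mul]

lemma rint_swap (hf : Continuous (fun p : ℝ × ℝ => f p.1 p.2)) :
    rint L B f = ∫ y in (-B)..B, ∫ x in (0:ℝ)..L, f x y := by
  refine intervalIntegral_intervalIntegral_swap ?_
  exact (Continuous.integrableOn_Icc (X := ℝ × ℝ) (a := (min 0 L, min (-B) B))
    (b := (max 0 L, max (-B) B)) hf).mono_set (by
      rw [← Icc_prod_Icc]
      exact prod_mono uIoc_subset_uIcc uIoc_subset_uIcc)

lemma rint_mul (a b : ℝ → ℝ) :
    rint L B (fun x y => a x * b y) = (∫ x in (0:ℝ)..L, a x) * ∫ y in (-B)..B, b y := by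
  simp [rint, intervalIntegral.integral_const_mul, intervalIntegral.integral_mul_const]

/-- Continuity in time of the integral over the rectangle. -/
lemma continuous_rint {F : ℝ → ℝ → ℝ → ℝ}
    (hF : Continuous (fun p : ℝ × ℝ × ℝ => F p.1 p.2.1 p.2.2)) :
    Continuous (fun t => rint L B (fun x y => F x y t)) := by
  unfold rint
  refine intervalIntegral.continuous_parametric_intervalIntegral_of_continuous'
    (f := fun t x => ∫ y in (-B)..B, F x y t) ?_ _ _
  refine intervalIntegral.continuous_parametric_intervalIntegral_of_continuous'
    (f := fun (q : ℝ × ℝ) y => F q.2 y q.1) ?_ _ _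
  exact hF.comp (by fun_prop : Continuous fun p : (ℝ × ℝ) × ℝ => (p.1.2, p.2, p.1.1))

/-- Cauchy–Schwarz against the constant function, obtained by integrating
`(h - c)² ≥ 0` with `c` the mean value of `h`. -/
lemma sq_integral_le {a b : ℝ} (hab : a ≤ b) {h : ℝ → ℝ} (hh : Continuous h) :
    (∫ s in a..b, h s) ^ 2 ≤ (b - a) * ∫ s in a..b, h s ^ 2 := by
  rcases hab.eq_or_lt with rfl | hlt
  · simp
  have hba : 0 < b - a := by linarith
  set I := ∫ s in a..b, h s with hI
  have h0 : 0 ≤ ∫ s in a..b, (h s - I / (b - a)) ^ 2 :=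
    intervalIntegral.integral_nonneg hab fun s _ => sq_nonneg _
  have e : ∫ s in a..b, (h s - I / (b - a)) ^ 2
      = (∫ s in a..b, h s ^ 2) - 2 * (I / (b - a)) * I + (b - a) * (I / (b - a)) ^ 2 := by
    have : ∀ s, (h s - I / (b - a)) ^ 2
        = h s ^ 2 - 2 * (I / (b - a)) * h s + (I / (b - a)) ^ 2 := fun s => by ring
    simp_rw [this]
    rw [intervalIntegral.integral_add
        ((by fun_prop : Continuous fun s => h s ^ 2 - 2 * (I / (b - a)) * h s).intervalIntegrable _ _)
        (continuous_const.intervalIntegrable _ _),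
      intervalIntegral.integral_sub ((by fun_prop : Continuous fun s => h s ^ 2).intervalIntegrable _ _)
        ((by fun_prop : Continuous fun s => 2 * (I / (b - a)) * h s).intervalIntegrable _ _),
      intervalIntegral.integral_const_mul, intervalIntegral.integral_const]
    simp [← hI]
  rw [e] at h0
  have h1 := mul_nonneg hba.le h0
  have e2 : (b - a) * ((∫ s in a..b, h s ^ 2) - 2 * (I / (b - a)) * I
      + (b - a) * (I / (b - a)) ^ 2) = (b - a) * (∫ s in a..b, h s ^ 2) - I ^ 2 := by
    field_simp; ring
  linarith

/-- One-dimensional Poincaré–Agmon inequality: a `C¹` function vanishing at the left endpoint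
is bounded pointwise by the `L²` norm of its derivative. -/
lemma sq_le_of_zero {a b : ℝ} {h h' : ℝ → ℝ} (hd : ∀ s, HasDerivAt h (h' s) s)
    (hc : Continuous h') (h0 : h a = 0) {x : ℝ} (hx : x ∈ Icc a b) :
    h x ^ 2 ≤ (b - a) * ∫ s in a..b, h' s ^ 2 := by
  have e : ∫ s in a..x, h' s = h x := by
    rw [intervalIntegral.integral_eq_sub_of_hasDerivAt (fun s _ => hd s)
      (hc.intervalIntegrable _ _), h0, sub_zero]
  have c2 : Continuous fun s => h' s ^ 2 := hc.pow 2
  have m : ∫ s in a..x, h' s ^ 2 ≤ ∫ s in a..b, h' s ^ 2 :=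
    intervalIntegral.integral_mono_interval le_rfl hx.1 hx.2
      (Filter.Eventually.of_forall fun s => sq_nonneg _) (c2.intervalIntegrable _ _)
  have n : 0 ≤ ∫ s in a..x, h' s ^ 2 :=
    intervalIntegral.integral_nonneg hx.1 fun s _ => sq_nonneg _
  have := sq_integral_le hx.1 hc
  rw [e] at this
  nlinarith [hx.1, hx.2]

/-- A function vanishing on `[a, b]` has vanishing derivative there, endpoints included. -/
lemma deriv_zero_of_Icc {a b : ℝ} (hab : a < b) {h : ℝ → ℝ} {d s : ℝ}
    (hd : HasDerivAt h d s) (hz : ∀ s ∈ Icc a b, h s = 0) (hs : s ∈ Icc a b) : d = 0 := by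
  have h1 : HasDerivWithinAt h 0 (Icc a b) s :=
    (hasDerivWithinAt_const s (Icc a b) (0 : ℝ)).congr hz (hz s hs)
  exact ((uniqueDiffOn_Icc hab) s hs).eq_deriv _ hd.hasDerivWithinAt h1

end Integrals

/-! ### Estimates at a fixed time -/

section FixedTime

variable {L B t R A : ℝ} {u v w p : ℝ → ℝ → ℝ → ℝ}

/-- The information on `u(·,t)` at a fixed time that the estimates consume: `u` is smooth,
`u(·,t)` and `u_t(·,t)` vanish on the left side, `u(·,t)` vanishes on the bottom side of the
rectangle, and `‖u_x(·,t)‖_{L²}`, `‖u_xy(·,t)‖_{L²}` are at most `R`. -/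
structure SliceBound (L B t R : ℝ) (u : ℝ → ℝ → ℝ → ℝ) : Prop where
  smooth : Smooth3 u
  left : ∀ y ∈ Icc (-B) B, u 0 y t = 0
  left_t : ∀ y ∈ Icc (-B) B, pdt u 0 y t = 0
  bottom : ∀ x ∈ Icc 0 L, u x (-B) t = 0
  dx : rint L B (fun x y => pdx u x y t ^ 2) ≤ R ^ 2
  dxy : rint L B (fun x y => pdy (pdx u) x y t ^ 2) ≤ R ^ 2

lemma SliceBound.pdx_sq_le (hu : SliceBound L B t R u) (hL : 0 < L)
    {x y : ℝ} (hx : x ∈ Icc 0 L) (hy : y ∈ Icc (-B) B) :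
    pdx u x y t ^ 2 ≤ (B - -B) * ∫ s in (-B)..B, pdy (pdx u) x s t ^ 2 :=
  sq_le_of_zero (fun s => hu.smooth.pdx.hasDerivAt_y x s t) (hu.smooth.pdx.pdy.cont_y x t)
    (deriv_zero_of_Icc hL (hu.smooth.hasDerivAt_x x (-B) t) hu.bottom hx) hy

/-- Agmon-type inequality: `u(·,t)` is bounded by its mixed derivative, since
`u(x,y) = ∫₀ˣ ∫_{-B}^y u_xy`. -/
lemma SliceBound.sq_le (hu : SliceBound L B t R u) (hL : 0 < L) (hB : 0 < B)
    {x y : ℝ} (hx : x ∈ Icc 0 L) (hy : y ∈ Icc (-B) B) :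
    u x y t ^ 2 ≤ 2 * B * L * R ^ 2 := by
  have h1 := sq_le_of_zero (fun s => hu.smooth.hasDerivAt_x s y t) (hu.smooth.pdx.cont_x y t)
    (hu.left y hy) hx
  have h2 : ∫ s in (0:ℝ)..L, pdx u s y t ^ 2
      ≤ ∫ s in (0:ℝ)..L, (B - -B) * ∫ r in (-B)..B, pdy (pdx u) s r t ^ 2 := by
    refine intervalIntegral.integral_mono_on hL.le
      ((hu.smooth.pdx.sq.cont_x y t).intervalIntegrable _ _)
      ((continuous_const.mul (continuous_inner_integral
        (hu.smooth.pdx.pdy.sq.cont_xy t) _ _)).intervalIntegrable _ _)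
      fun s hs => hu.pdx_sq_le hL hs hy
  rw [intervalIntegral.integral_const_mul] at h2
  have h3 := hu.dxy
  unfold rint at h3
  calc u x y t ^ 2 ≤ L * ((B - -B) * R ^ 2) := by
        refine h1.trans ?_
        rw [sub_zero]
        gcongr
        refine h2.trans ?_
        have : 0 ≤ B - -B := by linarith
        gcongr
    _ = _ := by ring

/-- `‖p u_x‖_{L²}² ≤ 2BL R² ‖p_x‖_{L²}²` when `‖u_xy‖_{L²} ≤ R`, for `p` vanishing on the left side: `p²` is bounded
by a function of `y` alone and `u_x²` by a function of `x` alone, so the integral of the product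
is bounded by a product of integrals. -/
lemma SliceBound.prod_le (hu : SliceBound L B t R u) (hL : 0 < L) (hB : 0 < B)
    (hp : Smooth3 p) (hp0 : ∀ y ∈ Icc (-B) B, p 0 y t = 0) :
    rint L B (fun x y => p x y t ^ 2 * pdx u x y t ^ 2)
      ≤ 2 * B * L * R ^ 2 * rint L B (fun x y => pdx p x y t ^ 2) := by
  have ca : Continuous fun x => (B - -B) * ∫ s in (-B)..B, pdy (pdx u) x s t ^ 2 :=
    continuous_const.mul (continuous_inner_integral (hu.smooth.pdx.pdy.sq.cont_xy t) _ _)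
  have cb : Continuous fun y => (L - 0) * ∫ s in (0:ℝ)..L, pdx p s y t ^ 2 :=
    continuous_const.mul (continuous_inner_integral (f := fun y s => pdx p s y t ^ 2)
      ((hp.pdx.sq.cont_xy t).comp continuous_swap) _ _)
  have h1 : rint L B (fun x y => p x y t ^ 2 * pdx u x y t ^ 2)
      ≤ rint L B (fun x y => ((B - -B) * ∫ s in (-B)..B, pdy (pdx u) x s t ^ 2) *
        ((L - 0) * ∫ s in (0:ℝ)..L, pdx p s y t ^ 2)) := by
    refine rint_mono hL.le hB.le ((hp.sq.mul hu.smooth.pdx.sq).cont_xy t)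
      ((ca.comp continuous_fst).mul (cb.comp continuous_snd)) fun x hx y hy => ?_
    rw [mul_comm]
    exact mul_le_mul (hu.pdx_sq_le hL hx hy)
      (sq_le_of_zero (fun s => hp.hasDerivAt_x s y t) (hp.pdx.cont_x y t) (hp0 y hy) hx)
      (sq_nonneg _) ((sq_nonneg _).trans (hu.pdx_sq_le hL hx hy))
  rw [rint_mul, intervalIntegral.integral_const_mul, intervalIntegral.integral_const_mul,
    ← rint_swap (f := fun x y => pdx p x y t ^ 2) (hp.pdx.sq.cont_xy t)] at h1
  have h3 := hu.dxy
  have h4 : 0 ≤ rint L B (fun x y => pdx p x y t ^ 2) :=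
    rint_nonneg hL.le hB.le fun _ _ => sq_nonneg _
  refine h1.trans ?_
  change (B - -B) * rint L B (fun x y => pdy (pdx u) x y t ^ 2) * _ ≤ _
  calc _ ≤ (B - -B) * R ^ 2 * ((L - 0) * rint L B (fun x y => pdx p x y t ^ 2)) := by
        have : 0 ≤ B - -B := by linarith
        have : 0 ≤ L - 0 := by linarith
        gcongr
    _ = _ := by ring

/-- Fixed-time estimate of `u²u_x - v²v_x = u²w_x + (u+v)wv_x`, `w = u - v`. -/
lemma l2norm_nonlin_le (hL : 0 < L) (hB : 0 < B) (hA : 0 ≤ A)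
    (hu : SliceBound L B t R u) (hv : SliceBound L B t R v)
    (hw : SliceBound L B t A (fun x y t => u x y t - v x y t)) :
    l2norm L B (fun x y => u x y t ^ 2 * pdx u x y t - v x y t ^ 2 * pdx v x y t)
      ≤ 3 * (2 * B * L) * R ^ 2 * A := by
  set K := 2 * B * L with hK
  have hK0 : 0 ≤ K := by positivity
  set w : ℝ → ℝ → ℝ → ℝ := fun x y t => u x y t - v x y t with hwdef
  refine Real.sqrt_le_iff.2 ⟨by positivity, ?_⟩
  have cF := ((hu.smooth.sq.mul hu.smooth.pdx).sub (hv.smooth.sq.mul hv.smooth.pdx)).sq.cont_xy t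
  have c1 := hw.smooth.pdx.sq.cont_xy t
  have c2 := hv.smooth.pdx.sq.cont_xy t
  have h1 : rint L B (fun x y => (u x y t ^ 2 * pdx u x y t - v x y t ^ 2 * pdx v x y t) ^ 2)
      ≤ rint L B (fun x y => 3 * (K * R ^ 2) ^ 2 * pdx w x y t ^ 2
          + 6 * ((K * R ^ 2) * (K * A ^ 2)) * pdx v x y t ^ 2) := by
    refine rint_mono hL.le hB.le cF ((continuous_const.mul c1).add (continuous_const.mul c2))
      fun x hx y hy => ?_
    have eu := hu.sq_le hL hB hx hy
    have ev := hv.sq_le hL hB hx hy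
    have ew := hw.sq_le hL hB hx hy
    have ex : pdx u x y t = pdx w x y t + pdx v x y t := by
      rw [hwdef, hu.smooth.pdx_sub hv.smooth]; ring
    have euw : u x y t = w x y t + v x y t := by simp [hwdef]
    have e : u x y t ^ 2 * pdx u x y t - v x y t ^ 2 * pdx v x y t
        = u x y t ^ 2 * pdx w x y t + u x y t * w x y t * pdx v x y t
          + v x y t * w x y t * pdx v x y t := by
      rw [ex, euw]; ring
    rw [e]
    have b1 : (u x y t ^ 2 * pdx w x y t) ^ 2 ≤ (K * R ^ 2) ^ 2 * pdx w x y t ^ 2 := by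
      rw [mul_pow]; gcongr
    have b2 : (u x y t * w x y t * pdx v x y t) ^ 2
        ≤ (K * R ^ 2) * (K * A ^ 2) * pdx v x y t ^ 2 := by
      rw [mul_pow, mul_pow]; gcongr
    have b3 : (v x y t * w x y t * pdx v x y t) ^ 2
        ≤ (K * R ^ 2) * (K * A ^ 2) * pdx v x y t ^ 2 := by
      rw [mul_pow, mul_pow]; gcongr
    generalize u x y t ^ 2 * pdx w x y t = a at *
    generalize u x y t * w x y t * pdx v x y t = b at *
    generalize v x y t * w x y t * pdx v x y t = c at *
    nlinarith [sq_nonneg (a - b), sq_nonneg (b - c), sq_nonneg (a - c)]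
  rw [rint_add (f := fun x y => 3 * (K * R ^ 2) ^ 2 * pdx w x y t ^ 2)
    (continuous_const.mul c1) (continuous_const.mul c2), rint_const_mul, rint_const_mul] at h1
  refine h1.trans ?_
  calc _ ≤ 3 * (K * R ^ 2) ^ 2 * A ^ 2 + 6 * ((K * R ^ 2) * (K * A ^ 2)) * R ^ 2 := by
        have := hw.dx
        have := hv.dx
        gcongr
    _ = _ := by ring

lemma sq_add_six_le (a b c d e f : ℝ) : (a + b + c + d + e + f) ^ 2
    ≤ 6 * (a ^ 2 + b ^ 2 + c ^ 2 + d ^ 2 + e ^ 2 + f ^ 2) := by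
  linarith [sq_nonneg (a - b), sq_nonneg (a - c), sq_nonneg (a - d), sq_nonneg (a - e),
    sq_nonneg (a - f), sq_nonneg (b - c), sq_nonneg (b - d), sq_nonneg (b - e),
    sq_nonneg (b - f), sq_nonneg (c - d), sq_nonneg (c - e), sq_nonneg (c - f),
    sq_nonneg (d - e), sq_nonneg (d - f), sq_nonneg (e - f)]

/-- Fixed-time estimate of `∂ₜ(u²u_x - v²v_x)`, expanded into six terms, each linear in
`w = u - v` or a derivative of `w`, and each containing one time derivative. -/
lemma l2norm_pdt_nonlin_le (hL : 0 < L) (hB : 0 < B) (hR : 0 ≤ R) (hA : 0 ≤ A)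
    (hu : SliceBound L B t R u) (hv : SliceBound L B t R v)
    (hw : SliceBound L B t A (fun x y t => u x y t - v x y t)) :
    l2norm L B (fun x y => pdt (fun x' y' t' => (u x' y' t') ^ 2 * pdx u x' y' t'
                  - (v x' y' t') ^ 2 * pdx v x' y' t') x y t)
      ≤ 6 * (2 * B * L) * R * (A * √(rint L B fun x y => pdx (pdt u) x y t ^ 2)
        + R * √(rint L B fun x y => pdx (pdt (fun x y t => u x y t - v x y t)) x y t ^ 2)
        + A * √(rint L B fun x y => pdx (pdt v) x y t ^ 2)) := by
  set K := 2 * B * L with hK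
  have hK0 : 0 ≤ K := by positivity
  set w : ℝ → ℝ → ℝ → ℝ := fun x y t => u x y t - v x y t with hwdef
  set gu := rint L B fun x y => pdx (pdt u) x y t ^ 2 with hgu
  set gv := rint L B fun x y => pdx (pdt v) x y t ^ 2 with hgv
  set gw := rint L B fun x y => pdx (pdt w) x y t ^ 2 with hgw
  have gu0 : 0 ≤ gu := rint_nonneg hL.le hB.le fun _ _ => sq_nonneg _
  have gv0 : 0 ≤ gv := rint_nonneg hL.le hB.le fun _ _ => sq_nonneg _
  have gw0 : 0 ≤ gw := rint_nonneg hL.le hB.le fun _ _ => sq_nonneg _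
  refine Real.sqrt_le_iff.2 ⟨by positivity, ?_⟩
  have cF := ((hu.smooth.sq.mul hu.smooth.pdx).sub (hv.smooth.sq.mul hv.smooth.pdx)).pdt.sq.cont_xy t
  have c1 := continuous_const (y := 24 * (K * A ^ 2)) |>.mul
    ((hu.smooth.pdt.sq.mul hu.smooth.pdx.sq).cont_xy t)
  have c2 := continuous_const (y := 24 * (K * R ^ 2)) |>.mul
    ((hw.smooth.pdt.sq.mul hu.smooth.pdx.sq).cont_xy t)
  have c3 := continuous_const (y := 24 * (K * R ^ 2)) |>.mul
    ((hv.smooth.pdt.sq.mul hw.smooth.pdx.sq).cont_xy t)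
  have c4 := continuous_const (y := 6 * (K * R ^ 2) ^ 2) |>.mul (hw.smooth.pdt.pdx.sq.cont_xy t)
  have c5 := continuous_const (y := 12 * ((K * R ^ 2) * (K * A ^ 2))) |>.mul
    (hv.smooth.pdt.pdx.sq.cont_xy t)
  have h1 : rint L B (fun x y => pdt (fun x' y' t' => (u x' y' t') ^ 2 * pdx u x' y' t'
                  - (v x' y' t') ^ 2 * pdx v x' y' t') x y t ^ 2)
      ≤ rint L B (fun x y => 24 * (K * A ^ 2) * (pdt u x y t ^ 2 * pdx u x y t ^ 2)
          + 24 * (K * R ^ 2) * (pdt w x y t ^ 2 * pdx u x y t ^ 2)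
          + 24 * (K * R ^ 2) * (pdt v x y t ^ 2 * pdx w x y t ^ 2)
          + 6 * (K * R ^ 2) ^ 2 * pdx (pdt w) x y t ^ 2
          + 12 * ((K * R ^ 2) * (K * A ^ 2)) * pdx (pdt v) x y t ^ 2) := by
    refine rint_mono hL.le hB.le cF ((((c1.add c2).add c3).add c4).add c5) fun x hx y hy => ?_
    have eu := hu.sq_le hL hB hx hy
    have ev := hv.sq_le hL hB hx hy
    have ew := hw.sq_le hL hB hx hy
    have ex : pdx u x y t = pdx w x y t + pdx v x y t := by
      rw [hwdef, hu.smooth.pdx_sub hv.smooth]; ring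
    have et : pdt u x y t = pdt w x y t + pdt v x y t := by
      rw [hwdef, hu.smooth.pdt_sub hv.smooth]; ring
    have ext : pdx (pdt u) x y t = pdx (pdt w) x y t + pdx (pdt v) x y t := by
      rw [hwdef, hu.smooth.pdt_sub hv.smooth, hu.smooth.pdt.pdx_sub hv.smooth.pdt]; ring
    have euw : u x y t = w x y t + v x y t := by simp [hwdef]
    have e : pdt (fun x' y' t' => (u x' y' t') ^ 2 * pdx u x' y' t'
                  - (v x' y' t') ^ 2 * pdx v x' y' t') x y t
        = 2 * w x y t * (pdt u x y t * pdx u x y t) + 2 * v x y t * (pdt w x y t * pdx u x y t)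
          + 2 * v x y t * (pdt v x y t * pdx w x y t) + u x y t ^ 2 * pdx (pdt w) x y t
          + u x y t * w x y t * pdx (pdt v) x y t + v x y t * w x y t * pdx (pdt v) x y t := by
      refine ((hu.smooth.pdt_sq_mul_pdx x y t).sub (hv.smooth.pdt_sq_mul_pdx x y t)).deriv.trans ?_
      rw [ext, et, ex, euw]; ring
    rw [e]
    have b1 : (2 * w x y t * (pdt u x y t * pdx u x y t)) ^ 2
        ≤ 4 * (K * A ^ 2) * (pdt u x y t ^ 2 * pdx u x y t ^ 2) := by
      rw [mul_pow, mul_pow, mul_pow]; norm_num only; gcongr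
    have b2 : (2 * v x y t * (pdt w x y t * pdx u x y t)) ^ 2
        ≤ 4 * (K * R ^ 2) * (pdt w x y t ^ 2 * pdx u x y t ^ 2) := by
      rw [mul_pow, mul_pow, mul_pow]; norm_num only; gcongr
    have b3 : (2 * v x y t * (pdt v x y t * pdx w x y t)) ^ 2
        ≤ 4 * (K * R ^ 2) * (pdt v x y t ^ 2 * pdx w x y t ^ 2) := by
      rw [mul_pow, mul_pow, mul_pow]; norm_num only; gcongr
    have b4 : (u x y t ^ 2 * pdx (pdt w) x y t) ^ 2
        ≤ (K * R ^ 2) ^ 2 * pdx (pdt w) x y t ^ 2 := by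
      rw [mul_pow]; gcongr
    have b5 : (u x y t * w x y t * pdx (pdt v) x y t) ^ 2
        ≤ (K * R ^ 2) * (K * A ^ 2) * pdx (pdt v) x y t ^ 2 := by
      rw [mul_pow, mul_pow]; gcongr
    have b6 : (v x y t * w x y t * pdx (pdt v) x y t) ^ 2
        ≤ (K * R ^ 2) * (K * A ^ 2) * pdx (pdt v) x y t ^ 2 := by
      rw [mul_pow, mul_pow]; gcongr
    refine (sq_add_six_le _ _ _ _ _ _).trans ?_
    linarith
  rw [rint_add (((c1.add c2).add c3).add c4) c5, rint_add ((c1.add c2).add c3) c4,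
    rint_add (c1.add c2) c3, rint_add c1 c2, rint_const_mul, rint_const_mul, rint_const_mul,
    rint_const_mul, rint_const_mul] at h1
  have p1 := hu.prod_le hL hB hu.smooth.pdt hu.left_t
  have p2 := hu.prod_le hL hB hw.smooth.pdt hw.left_t
  have p3 := hw.prod_le hL hB hv.smooth.pdt hv.left_t
  refine h1.trans ?_
  calc _ ≤ 24 * (K * A ^ 2) * (K * R ^ 2 * gu) + 24 * (K * R ^ 2) * (K * R ^ 2 * gw)
        + 24 * (K * R ^ 2) * (K * A ^ 2 * gv) + 6 * (K * R ^ 2) ^ 2 * gw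
        + 12 * ((K * R ^ 2) * (K * A ^ 2)) * gv := by gcongr
    _ = (6 * K * R) ^ 2 * ((2 / 3) * (A ^ 2 * gu) + (5 / 6) * (R ^ 2 * gw) + A ^ 2 * gv) := by ring
    _ ≤ (6 * K * R) ^ 2 * (A * √gu + R * √gw + A * √gv) ^ 2 := by
        gcongr
        have s1 := Real.sq_sqrt gu0
        have s2 := Real.sq_sqrt gv0
        have s3 := Real.sq_sqrt gw0
        have q1 : 0 ≤ A * √gu := by positivity
        have q2 : 0 ≤ R * √gw := by positivity
        have q3 : 0 ≤ A * √gv := by positivity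
        have e1 : A ^ 2 * gu = (A * √gu) ^ 2 := by rw [mul_pow, s1]
        have e2 : R ^ 2 * gw = (R * √gw) ^ 2 := by rw [mul_pow, s3]
        have e3 : A ^ 2 * gv = (A * √gv) ^ 2 := by rw [mul_pow, s2]
        rw [e1, e2, e3]
        nlinarith [mul_nonneg q1 q2, mul_nonneg q2 q3, mul_nonneg q1 q3, sq_nonneg (A * √gu),
          sq_nonneg (R * √gw)]
    _ = _ := by ring

end FixedTime

/-! ### The norm of `X_T` -/

section XT

variable {L B T : ℝ} {u : ℝ → ℝ → ℝ → ℝ}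

/-- The integrand of the squared `H²` norm, in terms of the partial derivatives of the function of
three variables. -/
noncomputable def h2dens (u : ℝ → ℝ → ℝ → ℝ) (x y t : ℝ) : ℝ :=
  u x y t ^ 2 + pdx u x y t ^ 2 + pdy u x y t ^ 2
    + pdx (pdx u) x y t ^ 2 + pdy (pdx u) x y t ^ 2 + pdy (pdy u) x y t ^ 2

lemma h2norm_slice (t : ℝ) :
    h2norm L B (fun x y => u x y t) = √(rint L B fun x y => h2dens u x y t) := rfl

lemma Smooth3.h2dens_continuous (hu : Smooth3 u) :
    Continuous (fun p : ℝ × ℝ × ℝ => h2dens u p.1 p.2.1 p.2.2) :=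
  ((((hu.sq.continuous.add hu.pdx.sq.continuous).add hu.pdy.sq.continuous).add
    hu.pdx.pdx.sq.continuous).add hu.pdx.pdy.sq.continuous).add hu.pdy.pdy.sq.continuous

lemma grad_term_nonneg (hL : 0 ≤ L) (hB : 0 ≤ B) (t : ℝ) :
    0 ≤ ∫ x in (0:ℝ)..L, ∫ y in (-B)..B,
      ((pdx (pdt u) x y t) ^ 2 + (pdy (pdt u) x y t) ^ 2) :=
  rint_nonneg (f := fun x y => (pdx (pdt u) x y t) ^ 2 + (pdy (pdt u) x y t) ^ 2) hL hB
    fun _ _ => by positivity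

lemma h2norm_le_XTnorm (hu : Smooth3 u) {t : ℝ} (ht : t ∈ Icc 0 T) :
    h2norm L B (fun x y => u x y t) ≤ XTnorm L B T u := by
  have hc : Continuous fun t => h2norm L B (fun x y => u x y t) :=
    Real.continuous_sqrt.comp (continuous_rint hu.h2dens_continuous)
  -- The supremum dominates its members only because the norm is bounded on `[0, T]`.
  have hb : BddAbove (range fun t : Icc (0:ℝ) T => h2norm L B (fun x y => u x y (t : ℝ))) := by
    have := (isCompact_Icc (a := (0:ℝ)) (b := T)).bddAbove_image hc.continuousOn
    rwa [image_eq_range] at this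
  have h1 := le_ciSup hb ⟨t, ht⟩
  have h2 : 0 ≤ ⨆ t : Set.Icc (0:ℝ) T, l2norm L B (fun x y => pdt u x y (t : ℝ)) :=
    Real.iSup_nonneg fun _ => Real.sqrt_nonneg _
  have h3 := Real.sqrt_nonneg (∫ t in (0:ℝ)..T, ∫ x in (0:ℝ)..L, ∫ y in (-B)..B,
      ((pdx (pdt u) x y t) ^ 2 + (pdy (pdt u) x y t) ^ 2))
  unfold XTnorm
  simp only at h1
  linarith

lemma XTnorm_nonneg : 0 ≤ XTnorm L B T u :=
  add_nonneg (add_nonneg (Real.iSup_nonneg fun _ => Real.sqrt_nonneg _)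
    (Real.iSup_nonneg fun _ => Real.sqrt_nonneg _)) (Real.sqrt_nonneg _)

/-- Cauchy–Schwarz in time: `∫₀ᵀ ‖u_tx‖_{L²} dt ≤ T^{1/2} ‖u‖_{X_T}`. -/
lemma integral_grad_le (hL : 0 < L) (hB : 0 < B) (hT : 0 < T) (hu : Smooth3 u) :
    ∫ t in (0:ℝ)..T, √(rint L B fun x y => pdx (pdt u) x y t ^ 2) ≤ √T * XTnorm L B T u := by
  have cg : Continuous fun t => rint L B fun x y => pdx (pdt u) x y t ^ 2 :=
    continuous_rint hu.pdt.pdx.sq.continuous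
  have cg2 : Continuous fun t => rint L B fun x y => pdx (pdt u) x y t ^ 2 + pdy (pdt u) x y t ^ 2 :=
    continuous_rint (F := fun x y t => pdx (pdt u) x y t ^ 2 + pdy (pdt u) x y t ^ 2)
      (hu.pdt.pdx.sq.continuous.add hu.pdt.pdy.sq.continuous)
  have h1 := sq_integral_le hT.le (Real.continuous_sqrt.comp cg)
  simp only [Function.comp] at h1
  have e : ∀ t, √(rint L B fun x y => pdx (pdt u) x y t ^ 2) ^ 2
      = rint L B fun x y => pdx (pdt u) x y t ^ 2 := fun t =>
    Real.sq_sqrt (rint_nonneg hL.le hB.le fun _ _ => sq_nonneg _)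
  simp_rw [e] at h1
  have h2 : ∫ t in (0:ℝ)..T, (rint L B fun x y => pdx (pdt u) x y t ^ 2)
      ≤ ∫ t in (0:ℝ)..T, rint L B fun x y => pdx (pdt u) x y t ^ 2 + pdy (pdt u) x y t ^ 2 := by
    refine intervalIntegral.integral_mono_on hT.le (cg.intervalIntegrable _ _)
      (cg2.intervalIntegrable _ _) fun t _ => ?_
    exact rint_mono hL.le hB.le (hu.pdt.pdx.sq.cont_xy t)
      ((hu.pdt.pdx.sq.cont_xy t).add (hu.pdt.pdy.sq.cont_xy t))
      fun x _ y _ => le_add_of_nonneg_right (sq_nonneg _)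
  have h3 : √(∫ t in (0:ℝ)..T, rint L B fun x y => pdx (pdt u) x y t ^ 2 + pdy (pdt u) x y t ^ 2)
      ≤ XTnorm L B T u := by
    have a1 : 0 ≤ ⨆ t : Set.Icc (0:ℝ) T, h2norm L B (fun x y => u x y (t : ℝ)) :=
      Real.iSup_nonneg fun _ => Real.sqrt_nonneg _
    have a2 : 0 ≤ ⨆ t : Set.Icc (0:ℝ) T, l2norm L B (fun x y => pdt u x y (t : ℝ)) :=
      Real.iSup_nonneg fun _ => Real.sqrt_nonneg _
    unfold XTnorm rint
    linarith
  calc _ ≤ √(T * ∫ t in (0:ℝ)..T, rint L B fun x y =>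
        pdx (pdt u) x y t ^ 2 + pdy (pdt u) x y t ^ 2) := by
        refine Real.le_sqrt_of_sq_le (h1.trans ?_)
        rw [sub_zero]
        gcongr
    _ = √T * √(∫ t in (0:ℝ)..T, rint L B fun x y =>
        pdx (pdt u) x y t ^ 2 + pdy (pdt u) x y t ^ 2) := Real.sqrt_mul hT.le _
    _ ≤ _ := by gcongr

lemma SliceBound.of_XTnorm (hL : 0 < L) (hB : 0 < B) (hT : 0 < T) (hu : Smooth3 u) {R : ℝ}
    (hl : ∀ t ∈ Icc 0 T, ∀ y ∈ Icc (-B) B, u 0 y t = 0)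
    (hb : ∀ t ∈ Icc 0 T, ∀ x ∈ Icc 0 L, u x (-B) t = 0)
    (hR : XTnorm L B T u ≤ R) {t : ℝ} (ht : t ∈ Icc 0 T) : SliceBound L B t R u := by
  have h0 : 0 ≤ rint L B fun x y => h2dens u x y t :=
    rint_nonneg hL.le hB.le fun _ _ => by unfold h2dens; positivity
  have h1 : (rint L B fun x y => h2dens u x y t) ≤ R ^ 2 := by
    rw [← Real.sq_sqrt h0, ← h2norm_slice]
    exact pow_le_pow_left₀ (Real.sqrt_nonneg _) ((h2norm_le_XTnorm hu ht).trans hR) 2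
  have hc : Continuous fun p : ℝ × ℝ => h2dens u p.1 p.2 t :=
    hu.h2dens_continuous.comp (by fun_prop : Continuous fun p : ℝ × ℝ => (p.1, p.2, t))
  refine ⟨hu, hl t ht, fun y hy => ?_, hb t ht, le_trans ?_ h1, le_trans ?_ h1⟩
  · exact deriv_zero_of_Icc hT (hu.hasDerivAt_t 0 y t) (fun s hs => hl s hs y hy) ht
  · refine rint_mono hL.le hB.le (hu.pdx.sq.cont_xy t) hc fun x _ y _ => ?_
    unfold h2dens
    linarith [sq_nonneg (u x y t), sq_nonneg (pdy u x y t), sq_nonneg (pdx (pdx u) x y t),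
      sq_nonneg (pdy (pdx u) x y t), sq_nonneg (pdy (pdy u) x y t)]
  · refine rint_mono hL.le hB.le (hu.pdx.pdy.sq.cont_xy t) hc fun x _ y _ => ?_
    unfold h2dens
    linarith [sq_nonneg (u x y t), sq_nonneg (pdy u x y t), sq_nonneg (pdx (pdx u) x y t),
      sq_nonneg (pdx u x y t), sq_nonneg (pdy (pdy u) x y t)]

/-- Continuity in time of the spatial `L²` norm, hence integrability in time. -/
lemma Smooth3.l2norm_continuous (hu : Smooth3 u) :
    Continuous fun t => l2norm L B (fun x y => u x y t) :=
  Real.continuous_sqrt.comp (continuous_rint hu.sq.continuous)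

end XT

/-! ### Integration in time -/

/-- Lipschitz (contraction) estimate for the nonlinearity `u ↦ u²u_x` of the modified
Zakharov–Kuznetsov equation in the norm `‖f‖_{Y_T} = ‖f‖_{L¹L²} + ‖f_t‖_{L¹L²}`:
there is `C = C(Ω) > 0` such that for all `T, R > 0` and smooth `u, v` vanishing on
`∂Ω` with `‖u‖_{X_T}, ‖v‖_{X_T} ≤ R`,
`‖u²u_x − v²v_x‖_{Y_T} ≤ C (T^{1/2} + T) R² ‖u − v‖_{X_T}`. -/
theorem mZK_contraction_estimate
    (L B : ℝ) (hL : 0 < L) (hB : 0 < B) :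
    ∃ C : ℝ, 0 < C ∧
      ∀ T R : ℝ, 0 < T → 0 < R →
        ∀ u v : ℝ → ℝ → ℝ → ℝ,
          ContDiff ℝ (⊤ : ℕ∞) (fun p : ℝ × ℝ × ℝ => u p.1 p.2.1 p.2.2) →
          ContDiff ℝ (⊤ : ℕ∞) (fun p : ℝ × ℝ × ℝ => v p.1 p.2.1 p.2.2) →
          (∀ t ∈ Set.Icc (0 : ℝ) T,
            (∀ x ∈ Set.Icc (0 : ℝ) L, u x (-B) t = 0 ∧ u x B t = 0 ∧
              v x (-B) t = 0 ∧ v x B t = 0) ∧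
            (∀ y ∈ Set.Icc (-B) B, u 0 y t = 0 ∧ u L y t = 0 ∧
              v 0 y t = 0 ∧ v L y t = 0)) →
          XTnorm L B T u ≤ R → XTnorm L B T v ≤ R →
          (∫ t in (0:ℝ)..T, l2norm L B (fun x y =>
              (u x y t) ^ 2 * pdx u x y t - (v x y t) ^ 2 * pdx v x y t))
            + (∫ t in (0:ℝ)..T, l2norm L B (fun x y =>
                pdt (fun x' y' t' => (u x' y' t') ^ 2 * pdx u x' y' t'
                  - (v x' y' t') ^ 2 * pdx v x' y' t') x y t))
          ≤ C * (Real.sqrt T + T) * R ^ 2 *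
              XTnorm L B T (fun x y t => u x y t - v x y t) := by
  -- `2BL` is the Agmon constant; `18 = 3 · 6` collects the three gradient terms.
  refine ⟨18 * (2 * B * L), by positivity, ?_⟩
  intro T R hT hR u v hu hv hbd hXu hXv
  change Smooth3 u at hu
  change Smooth3 v at hv
  have hw : Smooth3 (fun x y t => u x y t - v x y t) := hu.sub hv
  have hA : 0 ≤ XTnorm L B T (fun x y t => u x y t - v x y t) := XTnorm_nonneg
  have su : ∀ t ∈ Icc 0 T, SliceBound L B t R u := fun t ht =>
    SliceBound.of_XTnorm hL hB hT hu (fun t ht y hy => ((hbd t ht).2 y hy).1)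
      (fun t ht x hx => ((hbd t ht).1 x hx).1) hXu ht
  have sv : ∀ t ∈ Icc 0 T, SliceBound L B t R v := fun t ht =>
    SliceBound.of_XTnorm hL hB hT hv (fun t ht y hy => ((hbd t ht).2 y hy).2.2.1)
      (fun t ht x hx => ((hbd t ht).1 x hx).2.2.1) hXv ht
  have sw : ∀ t ∈ Icc 0 T, SliceBound L B t
      (XTnorm L B T (fun x y t => u x y t - v x y t)) (fun x y t => u x y t - v x y t) :=
    fun t ht => SliceBound.of_XTnorm hL hB hT hw
      (fun t ht y hy => by simp [((hbd t ht).2 y hy).1, ((hbd t ht).2 y hy).2.2.1])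
      (fun t ht x hx => by simp [((hbd t ht).1 x hx).1, ((hbd t ht).1 x hx).2.2.1]) le_rfl ht
  have gu := (integral_grad_le hL hB hT hu).trans (mul_le_mul_of_nonneg_left hXu (Real.sqrt_nonneg T))
  have gv := (integral_grad_le hL hB hT hv).trans (mul_le_mul_of_nonneg_left hXv (Real.sqrt_nonneg T))
  have gw := integral_grad_le hL hB hT hw
  set A := XTnorm L B T (fun x y t => u x y t - v x y t) with hAdef
  have hN : Smooth3 (fun x y t => u x y t ^ 2 * pdx u x y t - v x y t ^ 2 * pdx v x y t) :=
    (hu.sq.mul hu.pdx).sub (hv.sq.mul hv.pdx)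
  have cg : ∀ {f : ℝ → ℝ → ℝ → ℝ}, Smooth3 f →
      Continuous fun t => √(rint L B fun x y => pdx (pdt f) x y t ^ 2) := fun hf =>
    Real.continuous_sqrt.comp (continuous_rint hf.pdt.pdx.sq.continuous)
  have I1 : (∫ t in (0:ℝ)..T, l2norm L B (fun x y =>
      (u x y t) ^ 2 * pdx u x y t - (v x y t) ^ 2 * pdx v x y t))
      ≤ T * (3 * (2 * B * L) * R ^ 2 * A) := by
    have := intervalIntegral.integral_mono_on hT.le
      (hN.l2norm_continuous (L := L) (B := B) |>.intervalIntegrable (μ := volume) 0 T)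
      (continuous_const.intervalIntegrable (μ := volume) 0 T)
      (fun t ht => l2norm_nonlin_le hL hB hA (su t ht) (sv t ht) (sw t ht))
    simpa only [intervalIntegral.integral_const, sub_zero, smul_eq_mul] using this
  have cu := (cg hu).intervalIntegrable (μ := volume) 0 T
  have cv := (cg hv).intervalIntegrable (μ := volume) 0 T
  have cw := (cg hw).intervalIntegrable (μ := volume) 0 T
  have I2 := intervalIntegral.integral_mono_on hT.le
      (hN.pdt.l2norm_continuous (L := L) (B := B) |>.intervalIntegrable (μ := volume) 0 T)
      ((((cu.const_mul A).add (cw.const_mul R)).add (cv.const_mul A)).const_mul (6 * (2 * B * L) * R))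
      (fun t ht => l2norm_pdt_nonlin_le hL hB hR.le hA (su t ht) (sv t ht) (sw t ht))
  rw [intervalIntegral.integral_const_mul,
    intervalIntegral.integral_add ((cu.const_mul A).add (cw.const_mul R)) (cv.const_mul A),
    intervalIntegral.integral_add (cu.const_mul A) (cw.const_mul R),
    intervalIntegral.integral_const_mul, intervalIntegral.integral_const_mul,
    intervalIntegral.integral_const_mul] at I2
  have I3 : 6 * (2 * B * L) * R * (A * (√T * R) + R * (√T * A) + A * (√T * R))
      = 18 * (2 * B * L) * √T * R ^ 2 * A := by ring
  have I4 := I2.trans (b := _) (c := 18 * (2 * B * L) * √T * R ^ 2 * A) (by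
    rw [← I3]
    gcongr)
  refine (add_le_add I1 I4).trans ?_
  have : 0 ≤ T * (2 * B * L) * R ^ 2 * A := by positivity
  linarith
end

section
/- Let L, B > 0 satisfy 2A² := π²(3/L² + 1/(4B²)) − 1 > 0, and let Ω = (0,L) × (−B,B). Let u be a smooth function on [0,L] × [−B,B] × [0,∞) satisfying the modified Zakharov–Kuznetsov equation u_t + u_x + u²u_x + u_{xxx} + u_{xyy} = 0 on Ω × (0,∞), with boundary conditions u(x,±B,t) = 0 and u(0,y,t) = u(L,y,t) = u_x(L,y,t) = 0 for all t > 0, and assume the smallness condition ∫_Ω u²(0) dx dy < A²/(2π²(1/L² + 1/(4B²))). Then for every t ≥ 0, ∫_Ω u²(t) dx dy ≤ ∫_Ω (1+x) u²(t) dx dy ≤ e^{−(A²/(1+L)) t} ∫_Ω (1+x) u²(0) dx dy. -/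
/-!
Multiplying the equation by `2 (1 + κ x) u` and integrating over the rectangle gives, for every
weight `1 + κ x`, the energy inequality (`energy_slice`)
`d/dt ∫ (1 + κ x) u² ≤ κ (∫ u² + ½ ∫ u⁴ - 3 ∫ u_x² - ∫ u_y²)`.
For `κ = 0` it says that the mass `∫ u²` does not increase, so the smallness of the initial mass
persists. For `κ = 1` the positive terms are absorbed by the dissipation: Nirenberg's inequality
(`nirenberg`) bounds `½ ∫ u⁴` by `(∫ u²) (∫ u_x² + ∫ u_y²)`, which the small mass makes a
fraction of the dissipation, and the Steklov inequalities (`steklov`) with sharp constants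
`π² / L²` and `π² / (4 B²)` bound the rest below by `(A² + 1) ∫ u²`
(`dissipation_bound`). What is left is `-A² ∫ u² ≤ -(A² / (1 + L)) ∫ (1 + x) u²`, and Gronwall's
lemma (`gronwall_decay`) concludes. The initial time needs no equation: the energies are
differentiable at every time, and their monotonicity on `[0, ∞)` uses the sign of the derivative
in the interior only.
-/

open MeasureTheory Real Set

/-! ### Iterated integrals over a rectangle -/

/-- The iterated integral of `f` over the rectangle `(a,b) × (c,d)`. -/
noncomputable def rectInt (a b c d : ℝ) (f : ℝ × ℝ → ℝ) : ℝ :=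
  ∫ x in a..b, ∫ y in c..d, f (x, y)

lemma continuous_integral_snd {f : ℝ × ℝ → ℝ} (hf : Continuous f) (c d : ℝ) :
    Continuous fun x => ∫ y in c..d, f (x, y) :=
  intervalIntegral.continuous_parametric_intervalIntegral_of_continuous'
    (f := fun x y => f (x, y)) (by simpa [Function.uncurry_def] using hf) c d

lemma continuous_integral_fst {f : ℝ × ℝ → ℝ} (hf : Continuous f) (a b : ℝ) :
    Continuous fun y => ∫ x in a..b, f (x, y) :=
  continuous_integral_snd (f := fun p => f (p.2, p.1)) (by fun_prop) a b

lemma rectInt_swap (a b c d : ℝ) {f : ℝ × ℝ → ℝ} (hf : Continuous f) :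
    rectInt a b c d f = ∫ y in c..d, ∫ x in a..b, f (x, y) := by
  unfold rectInt
  apply MeasureTheory.intervalIntegral_intervalIntegral_swap (F := fun x y => f (x, y))
  have h : IntegrableOn f (uIcc a b ×ˢ uIcc c d) (volume.prod volume) :=
    hf.continuousOn.integrableOn_compact (isCompact_uIcc.prod isCompact_uIcc)
  exact h.mono_set (prod_mono uIoc_subset_uIcc uIoc_subset_uIcc)

lemma rectInt_mono {a b c d : ℝ} (hab : a ≤ b) (hcd : c ≤ d) {f g : ℝ × ℝ → ℝ}
    (hf : Continuous f) (hg : Continuous g)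
    (h : ∀ x ∈ Ioo a b, ∀ y ∈ Ioo c d, f (x, y) ≤ g (x, y)) :
    rectInt a b c d f ≤ rectInt a b c d g := by
  refine intervalIntegral.integral_mono_on_of_le_Ioo hab
    ((continuous_integral_snd hf c d).intervalIntegrable _ _)
    ((continuous_integral_snd hg c d).intervalIntegrable _ _) fun x hx => ?_
  exact intervalIntegral.integral_mono_on_of_le_Ioo hcd
    (Continuous.intervalIntegrable (by fun_prop) _ _)
    (Continuous.intervalIntegrable (by fun_prop) _ _) (h x hx)

lemma rectInt_congr {a b c d : ℝ} (hab : a ≤ b) (hcd : c ≤ d) {f g : ℝ × ℝ → ℝ}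
    (hf : Continuous f) (hg : Continuous g)
    (h : ∀ x ∈ Ioo a b, ∀ y ∈ Ioo c d, f (x, y) = g (x, y)) :
    rectInt a b c d f = rectInt a b c d g :=
  le_antisymm (rectInt_mono hab hcd hf hg fun x hx y hy => (h x hx y hy).le)
    (rectInt_mono hab hcd hg hf fun x hx y hy => (h x hx y hy).ge)

lemma rectInt_add (a b c d : ℝ) {f g : ℝ × ℝ → ℝ} (hf : Continuous f) (hg : Continuous g) :
    rectInt a b c d (fun p => f p + g p) = rectInt a b c d f + rectInt a b c d g := by
  unfold rectInt
  rw [← intervalIntegral.integral_add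
    ((continuous_integral_snd hf c d).intervalIntegrable _ _)
    ((continuous_integral_snd hg c d).intervalIntegrable _ _)]
  congr 1
  ext x
  exact intervalIntegral.integral_add (Continuous.intervalIntegrable (by fun_prop) _ _)
    (Continuous.intervalIntegrable (by fun_prop) _ _)

lemma rectInt_const_mul (a b c d k : ℝ) (f : ℝ × ℝ → ℝ) :
    rectInt a b c d (fun p => k * f p) = k * rectInt a b c d f := by
  simp [rectInt]

lemma rectInt_nonneg {a b c d : ℝ} (hab : a ≤ b) (hcd : c ≤ d) {f : ℝ × ℝ → ℝ}
    (h : ∀ p, 0 ≤ f p) : 0 ≤ rectInt a b c d f :=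
  intervalIntegral.integral_nonneg hab fun _ _ =>
    intervalIntegral.integral_nonneg hcd fun _ _ => h _

/-- Integrating a partial derivative in the first variable leaves only boundary values. -/
lemma rectInt_deriv_fst (a b c d : ℝ) {f f' : ℝ × ℝ → ℝ} (hf' : Continuous f')
    (h : ∀ x y, HasDerivAt (fun s => f (s, y)) (f' (x, y)) x) :
    rectInt a b c d f' = ∫ y in c..d, (f (b, y) - f (a, y)) := by
  rw [rectInt_swap a b c d hf']
  congr 1
  ext y
  exact intervalIntegral.integral_eq_sub_of_hasDerivAt (fun x _ => h x y)
    (Continuous.intervalIntegrable (by fun_prop) _ _)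

/-- Integrating a partial derivative in the second variable leaves only boundary values. -/
lemma rectInt_deriv_snd (a b c d : ℝ) {f f' : ℝ × ℝ → ℝ} (hf' : Continuous f')
    (h : ∀ x y, HasDerivAt (fun s => f (x, s)) (f' (x, y)) y) :
    rectInt a b c d f' = ∫ x in a..b, (f (x, d) - f (x, c)) := by
  unfold rectInt
  congr 1
  ext x
  exact intervalIntegral.integral_eq_sub_of_hasDerivAt (fun y _ => h x y)
    (Continuous.intervalIntegrable (by fun_prop) _ _)

/-- Differentiation under the integral sign on a compact interval, the parameter being the last
variable. -/
lemma hasDerivAt_integral_param {f f' : ℝ × ℝ → ℝ} (hf : Continuous f) (hf' : Continuous f')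
    (h : ∀ x t, HasDerivAt (fun s => f (x, s)) (f' (x, t)) t) (a b t : ℝ) :
    HasDerivAt (fun s => ∫ x in a..b, f (x, s)) (∫ x in a..b, f' (x, t)) t := by
  obtain ⟨C, hC⟩ := (isCompact_uIcc.prod (isCompact_Icc (a := t - 1) (b := t + 1))
    : IsCompact (uIcc a b ×ˢ Icc (t - 1) (t + 1))).exists_bound_of_continuousOn hf'.continuousOn
  refine (intervalIntegral.hasDerivAt_integral_of_dominated_loc_of_deriv_le
    (F := fun s x => f (x, s)) (F' := fun s x => f' (x, s)) (bound := fun _ => C)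
    (s := Icc (t - 1) (t + 1)) (Icc_mem_nhds (by linarith) (by linarith)) ?_ ?_ ?_ ?_ ?_ ?_).2
  · exact Filter.Eventually.of_forall fun s =>
      (Continuous.aestronglyMeasurable (by fun_prop))
  · exact Continuous.intervalIntegrable (by fun_prop) _ _
  · exact Continuous.aestronglyMeasurable (by fun_prop)
  · exact Filter.Eventually.of_forall fun x hx s hs => hC (x, s) ⟨uIoc_subset_uIcc hx, hs⟩
  · exact intervalIntegrable_const
  · exact Filter.Eventually.of_forall fun x _ s _ => h x s

lemma hasDerivAt_rectInt {f f' : ℝ × ℝ × ℝ → ℝ} (hf : Continuous f) (hf' : Continuous f')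
    (h : ∀ x y t, HasDerivAt (fun s => f (x, y, s)) (f' (x, y, t)) t) (a b c d t : ℝ) :
    HasDerivAt (fun s => rectInt a b c d fun p => f (p.1, p.2, s))
      (rectInt a b c d fun p => f' (p.1, p.2, t)) t := by
  have key : ∀ g : ℝ × ℝ × ℝ → ℝ, Continuous g →
      Continuous fun q : ℝ × ℝ => ∫ y in c..d, g (q.1, y, q.2) := fun g hg =>
    intervalIntegral.continuous_parametric_intervalIntegral_of_continuous'
      (f := fun (q : ℝ × ℝ) y => g (q.1, y, q.2)) (by
        show Continuous fun r : (ℝ × ℝ) × ℝ => g (r.1.1, r.2, r.1.2)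
        fun_prop) c d
  refine hasDerivAt_integral_param (f := fun q => ∫ y in c..d, f (q.1, y, q.2))
    (f' := fun q => ∫ y in c..d, f' (q.1, y, q.2)) (key f hf) (key f' hf') (fun x s => ?_) a b t
  exact hasDerivAt_integral_param (f := fun q => f (x, q.1, q.2))
    (f' := fun q => f' (x, q.1, q.2)) (by fun_prop) (by fun_prop) (fun y s => h x y s) c d s

/-! ### The sharp Steklov inequality -/

/-- For `k` below the first Dirichlet frequency `π / (b - a)` the function
`cos (k (x - (a + b) / 2))` does not vanish on `[a, b]`, and
the derivative `g` of `f` satisfies `g² - k² f² = (g + k f tan)² - d/dx (k f² tan)`, whose last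
term integrates to zero. -/
lemma steklov_aux {a b k : ℝ} (hab : a < b) (hk : 0 < k) (hkb : k * (b - a) < π)
    {f f' : ℝ → ℝ} (hf' : Continuous f') (h : ∀ x, HasDerivAt f (f' x) x)
    (ha : f a = 0) (hb : f b = 0) :
    k ^ 2 * ∫ x in a..b, f x ^ 2 ≤ ∫ x in a..b, f' x ^ 2 := by
  have hf : Continuous f := continuous_iff_continuousAt.2 fun x => (h x).continuousAt
  set m := (a + b) / 2 with hm
  have hcos : ∀ x ∈ Icc a b, 0 < cos (k * (x - m)) := fun x hx => by
    apply cos_pos_of_mem_Ioo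
    constructor <;> nlinarith [mul_le_mul_of_nonneg_left hx.1 hk.le,
      mul_le_mul_of_nonneg_left hx.2 hk.le]
  have hd : ∀ x ∈ uIcc a b, HasDerivAt (fun x => k * (f x ^ 2 * (sin (k * (x - m)) / cos (k * (x - m)))))
      (2 * k * f x * f' x * (sin (k * (x - m)) / cos (k * (x - m)))
        + k ^ 2 * f x ^ 2 * (1 / cos (k * (x - m)) ^ 2)) x := fun x hx => by
    rw [uIcc_of_le hab.le] at hx
    have hc := (hcos x hx).ne'
    have h1 : HasDerivAt (fun x => k * (x - m)) k x := by
      simpa using ((hasDerivAt_id x).sub_const m).const_mul k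
    have h2 := (((h x).pow 2).mul ((h1.sin).div h1.cos hc)).const_mul k
    refine h2.congr_deriv ?_
    have := sin_sq_add_cos_sq (k * (x - m))
    simp only [Pi.pow_apply, Pi.div_apply]
    field_simp
    have hs : sin (k * (x - m)) ^ 2 = 1 - cos (k * (x - m)) ^ 2 := by linarith
    simp only [hs]
    push_cast
    ring
  have hcosc : ContinuousOn (fun x => sin (k * (x - m)) / cos (k * (x - m))) (uIcc a b) := by
    rw [uIcc_of_le hab.le]
    exact ContinuousOn.div (by fun_prop) (by fun_prop) fun x hx => (hcos x hx).ne'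
  have hsecc : ContinuousOn (fun x => 1 / cos (k * (x - m)) ^ 2) (uIcc a b) := by
    rw [uIcc_of_le hab.le]
    exact ContinuousOn.div (by fun_prop) (by fun_prop) fun x hx => pow_ne_zero 2 (hcos x hx).ne'
  have hint : IntervalIntegrable (fun x =>
      (2 * k * f x * f' x * (sin (k * (x - m)) / cos (k * (x - m)))
        + k ^ 2 * f x ^ 2 * (1 / cos (k * (x - m)) ^ 2))) volume a b := by
    apply ContinuousOn.intervalIntegrable
    exact (ContinuousOn.mul (by fun_prop) hcosc).add (ContinuousOn.mul (by fun_prop) hsecc)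
  have hz := intervalIntegral.integral_eq_sub_of_hasDerivAt hd hint
  simp only [ha, hb] at hz
  rw [← intervalIntegral.integral_const_mul]
  have hi1 : IntervalIntegrable (fun x => k ^ 2 * f x ^ 2) volume a b :=
    Continuous.intervalIntegrable (by fun_prop) _ _
  have hi2 : IntervalIntegrable (fun x => f' x ^ 2) volume a b :=
    Continuous.intervalIntegrable (by fun_prop) _ _
  have hmono := intervalIntegral.integral_mono_on hab.le hi1 (hi2.add hint) fun x hx => by
    have hc := (hcos x hx).ne'
    have hs := sin_sq_add_cos_sq (k * (x - m))
    have hsec : 1 / cos (k * (x - m)) ^ 2 = 1 + (sin (k * (x - m)) / cos (k * (x - m))) ^ 2 := by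
      field_simp
      linarith
    rw [hsec]
    nlinarith [sq_nonneg (f' x + k * f x * (sin (k * (x - m)) / cos (k * (x - m))))]
  rw [intervalIntegral.integral_add hi2 hint, hz] at hmono
  linarith

lemma steklov {a b : ℝ} (hab : a < b) {f f' : ℝ → ℝ} (hf' : Continuous f')
    (h : ∀ x, HasDerivAt f (f' x) x) (ha : f a = 0) (hb : f b = 0) :
    π ^ 2 / (b - a) ^ 2 * ∫ x in a..b, f x ^ 2 ≤ ∫ x in a..b, f' x ^ 2 := by
  have hba : 0 < b - a := sub_pos.2 hab
  have hpos : 0 < π / (b - a) := div_pos pi_pos hba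
  -- let `k` tend to `π / (b - a)` from below in `steklov_aux`
  have hlim : Filter.Tendsto (fun k : ℝ => k ^ 2 * ∫ x in a..b, f x ^ 2)
      (nhdsWithin (π / (b - a)) (Iio (π / (b - a))))
      (nhds ((π / (b - a)) ^ 2 * ∫ x in a..b, f x ^ 2)) :=
    (Continuous.tendsto (by fun_prop) _).mono_left nhdsWithin_le_nhds
  rw [← div_pow]
  refine le_of_tendsto hlim ?_
  filter_upwards [Ioo_mem_nhdsLT hpos] with k hk
  exact steklov_aux hab hk.1 ((lt_div_iff₀ hba).1 hk.2) hf' h ha hb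

/-! ### Inequalities on the rectangle -/

lemma steklov_fst {a b c d : ℝ} (hab : a < b) (hcd : c ≤ d) {v vx : ℝ × ℝ → ℝ}
    (hv : Continuous v) (hvx : Continuous vx)
    (h : ∀ x y, HasDerivAt (fun s => v (s, y)) (vx (x, y)) x)
    (hbc : ∀ y ∈ Ioo c d, v (a, y) = 0 ∧ v (b, y) = 0) :
    π ^ 2 / (b - a) ^ 2 * rectInt a b c d (fun p => v p ^ 2)
      ≤ rectInt a b c d (fun p => vx p ^ 2) := by
  rw [rectInt_swap a b c d (by fun_prop), rectInt_swap a b c d (by fun_prop),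
    ← intervalIntegral.integral_const_mul]
  refine intervalIntegral.integral_mono_on_of_le_Ioo hcd
    (((continuous_integral_fst (f := fun p => v p ^ 2) (by fun_prop) a b).const_mul _
      ).intervalIntegrable _ _)
    ((continuous_integral_fst (f := fun p => vx p ^ 2) (by fun_prop) a b).intervalIntegrable _ _)
    fun y hy => ?_
  exact steklov hab (f := fun x => v (x, y)) (f' := fun x => vx (x, y)) (by fun_prop)
    (fun x => h x y) (hbc y hy).1 (hbc y hy).2

lemma steklov_snd {a b c d : ℝ} (hab : a ≤ b) (hcd : c < d) {v vy : ℝ × ℝ → ℝ}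
    (hv : Continuous v) (hvy : Continuous vy)
    (h : ∀ x y, HasDerivAt (fun s => v (x, s)) (vy (x, y)) y)
    (hbc : ∀ x ∈ Ioo a b, v (x, c) = 0 ∧ v (x, d) = 0) :
    π ^ 2 / (d - c) ^ 2 * rectInt a b c d (fun p => v p ^ 2)
      ≤ rectInt a b c d (fun p => vy p ^ 2) := by
  unfold rectInt
  rw [← intervalIntegral.integral_const_mul]
  refine intervalIntegral.integral_mono_on_of_le_Ioo hab
    (((continuous_integral_snd (f := fun p => v p ^ 2) (by fun_prop) c d).const_mul _
      ).intervalIntegrable _ _)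
    ((continuous_integral_snd (f := fun p => vy p ^ 2) (by fun_prop) c d).intervalIntegrable _ _)
    fun x hx => ?_
  exact steklov hcd (f := fun y => v (x, y)) (f' := fun y => vy (x, y)) (by fun_prop)
    (fun y => h x y) (hbc x hx).1 (hbc x hx).2

lemma rectInt_abs_mul_sq_le {a b c d : ℝ} (hab : a ≤ b) (hcd : c ≤ d) {f g : ℝ × ℝ → ℝ}
    (hf : Continuous f) (hg : Continuous g) :
    rectInt a b c d (fun p => |f p * g p|) ^ 2
      ≤ rectInt a b c d (fun p => f p ^ 2) * rectInt a b c d (fun p => g p ^ 2) := by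
  -- the quadratic `s ↦ ∫ (s |f| + |g|)²` is nonnegative, so its discriminant is not positive
  have hq : ∀ s : ℝ, 0 ≤ rectInt a b c d (fun p => f p ^ 2) * (s * s)
      + (2 * rectInt a b c d (fun p => |f p * g p|)) * s + rectInt a b c d (fun p => g p ^ 2) := by
    intro s
    have h0 : 0 ≤ rectInt a b c d (fun p => (s * s) * f p ^ 2 + (2 * s * |f p * g p| + g p ^ 2)) :=
      rectInt_nonneg hab hcd fun p => by
        have : (s * s) * f p ^ 2 + (2 * s * |f p * g p| + g p ^ 2) = (s * |f p| + |g p|) ^ 2 := by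
          rw [abs_mul, ← sq_abs (f p), ← sq_abs (g p)]
          ring
        rw [this]
        positivity
    rw [rectInt_add (f := fun p => (s * s) * f p ^ 2) (g := fun p => 2 * s * |f p * g p| + g p ^ 2)
        a b c d (by fun_prop) (by fun_prop),
      rectInt_add (f := fun p => 2 * s * |f p * g p|) (g := fun p => g p ^ 2)
        a b c d (by fun_prop) (by fun_prop),
      rectInt_const_mul _ _ _ _ _ (fun p => f p ^ 2),
      rectInt_const_mul _ _ _ _ _ (fun p => |f p * g p|)] at h0
    linarith
  have := discrim_le_zero hq
  unfold discrim at this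
  nlinarith

lemma sq_le_integral_abs {a b : ℝ} {f f' : ℝ → ℝ} (hf' : Continuous f')
    (h : ∀ x, HasDerivAt f (f' x) x) (ha : f a = 0) {x : ℝ} (hx : x ∈ Icc a b) :
    f x ^ 2 ≤ 2 * ∫ s in a..b, |f s * f' s| := by
  have hf : Continuous f := continuous_iff_continuousAt.2 fun x => (h x).continuousAt
  have h1 : ∫ s in a..x, 2 * (f s * f' s) = f x ^ 2 - f a ^ 2 :=
    intervalIntegral.integral_eq_sub_of_hasDerivAt (f := fun s => f s ^ 2)
      (fun s _ => ((h s).pow 2).congr_deriv (by simp; ring))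
      (Continuous.intervalIntegrable (by fun_prop) _ _)
  rw [intervalIntegral.integral_const_mul, ha] at h1
  have h2 : ∫ s in a..x, f s * f' s ≤ ∫ s in a..x, |f s * f' s| :=
    intervalIntegral.integral_mono_on hx.1 (Continuous.intervalIntegrable (by fun_prop) _ _)
      (Continuous.intervalIntegrable (by fun_prop) _ _) fun s _ => le_abs_self _
  have h3 : ∫ s in a..x, |f s * f' s| ≤ ∫ s in a..b, |f s * f' s| :=
    intervalIntegral.integral_mono_interval le_rfl hx.1 hx.2
      (Filter.Eventually.of_forall fun s => abs_nonneg _)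
      (Continuous.intervalIntegrable (by fun_prop) _ _)
  linarith

/-- Nirenberg's inequality. It follows from
`v² (x, y) ≤ 2 ∫ |v v_x| dx` and `v² (x, y) ≤ 2 ∫ |v v_y| dy`, the first bound depending on `y`
only and the second on `x` only, so that their product integrates to a product. -/
lemma nirenberg {a b c d : ℝ} (hab : a ≤ b) (hcd : c ≤ d) {v vx vy : ℝ × ℝ → ℝ}
    (hv : Continuous v) (hvx : Continuous vx) (hvy : Continuous vy)
    (hx : ∀ x y, HasDerivAt (fun s => v (s, y)) (vx (x, y)) x)
    (hy : ∀ x y, HasDerivAt (fun s => v (x, s)) (vy (x, y)) y)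
    (hbx : ∀ y ∈ Ioo c d, v (a, y) = 0) (hby : ∀ x ∈ Ioo a b, v (x, c) = 0) :
    rectInt a b c d (fun p => v p ^ 4) ≤ 2 * rectInt a b c d (fun p => v p ^ 2) *
      (rectInt a b c d (fun p => vx p ^ 2) + rectInt a b c d (fun p => vy p ^ 2)) := by
  set F : ℝ → ℝ := fun y => ∫ x in a..b, |v (x, y) * vx (x, y)| with hF
  set G : ℝ → ℝ := fun x => ∫ y in c..d, |v (x, y) * vy (x, y)| with hG
  have hFc : Continuous F :=
    continuous_integral_fst (f := fun p => |v p * vx p|) (by fun_prop) a b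
  have hGc : Continuous G :=
    continuous_integral_snd (f := fun p => |v p * vy p|) (by fun_prop) c d
  have h1 : rectInt a b c d (fun p => v p ^ 4)
      ≤ rectInt a b c d (fun p => 4 * (G p.1 * F p.2)) := by
    refine rectInt_mono hab hcd (by fun_prop) (by fun_prop) fun x hx' y hy' => ?_
    have hf : v (x, y) ^ 2 ≤ 2 * F y :=
      sq_le_integral_abs (f := fun x => v (x, y)) (f' := fun x => vx (x, y)) (by fun_prop)
        (fun x => hx x y) (hbx y hy') (Ioo_subset_Icc_self hx')
    have hg : v (x, y) ^ 2 ≤ 2 * G x :=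
      sq_le_integral_abs (f := fun y => v (x, y)) (f' := fun y => vy (x, y)) (by fun_prop)
        (fun y => hy x y) (hby x hx') (Ioo_subset_Icc_self hy')
    have := mul_le_mul hf hg (sq_nonneg _) ((sq_nonneg _).trans hf)
    calc v (x, y) ^ 4 = v (x, y) ^ 2 * v (x, y) ^ 2 := by ring
      _ ≤ _ := this
      _ = _ := by ring
  have h2 : rectInt a b c d (fun p => 4 * (G p.1 * F p.2))
      = 4 * ((∫ x in a..b, G x) * ∫ y in c..d, F y) := by
    simp [rectInt]
  have h3 : ∫ y in c..d, F y = rectInt a b c d (fun p => |v p * vx p|) :=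
    (rectInt_swap a b c d (f := fun p => |v p * vx p|) (by fun_prop)).symm
  have h4 : ∫ x in a..b, G x = rectInt a b c d (fun p => |v p * vy p|) := rfl
  have h5 := rectInt_abs_mul_sq_le hab hcd hv hvx
  have h6 := rectInt_abs_mul_sq_le hab hcd hv hvy
  rw [h2, h3, h4] at h1
  nlinarith [sq_nonneg (rectInt a b c d (fun p => |v p * vx p|)
    - rectInt a b c d (fun p => |v p * vy p|))]

/-! ### Partial derivatives of smooth functions -/

section Smooth

variable {u : ℝ → ℝ → ℝ → ℝ}

lemma hasDerivAt_pdx (hu : ContDiff ℝ (⊤ : ℕ∞) (fun p : ℝ × ℝ × ℝ => u p.1 p.2.1 p.2.2))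
    (x y t : ℝ) : HasDerivAt (fun s => u s y t) (pdx u x y t) x := by
  have h : ContDiff ℝ (⊤ : ℕ∞) (fun s : ℝ => u s y t) :=
    hu.comp (f := fun s : ℝ => (s, y, t)) (by fun_prop)
  exact (h.differentiable (by simp) x).hasDerivAt

lemma hasDerivAt_pdy (hu : ContDiff ℝ (⊤ : ℕ∞) (fun p : ℝ × ℝ × ℝ => u p.1 p.2.1 p.2.2))
    (x y t : ℝ) : HasDerivAt (fun s => u x s t) (pdy u x y t) y := by
  have h : ContDiff ℝ (⊤ : ℕ∞) (fun s : ℝ => u x s t) :=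
    hu.comp (f := fun s : ℝ => (x, s, t)) (by fun_prop)
  exact (h.differentiable (by simp) y).hasDerivAt

lemma hasDerivAt_pdt (hu : ContDiff ℝ (⊤ : ℕ∞) (fun p : ℝ × ℝ × ℝ => u p.1 p.2.1 p.2.2))
    (x y t : ℝ) : HasDerivAt (fun s => u x y s) (pdt u x y t) t := by
  have h : ContDiff ℝ (⊤ : ℕ∞) (fun s : ℝ => u x y s) :=
    hu.comp (f := fun s : ℝ => (x, y, s)) (by fun_prop)
  exact (h.differentiable (by simp) t).hasDerivAt

lemma pdx_eq_fderiv (hu : ContDiff ℝ (⊤ : ℕ∞) (fun p : ℝ × ℝ × ℝ => u p.1 p.2.1 p.2.2))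
    (p : ℝ × ℝ × ℝ) : pdx u p.1 p.2.1 p.2.2
      = fderiv ℝ (fun p : ℝ × ℝ × ℝ => u p.1 p.2.1 p.2.2) p (1, 0, 0) := by
  obtain ⟨x, y, t⟩ := p
  have h1 := (hu.differentiable (by simp) (x, y, t)).hasFDerivAt
  have h2 : HasDerivAt (fun s : ℝ => (s, y, t)) ((1 : ℝ), (0 : ℝ), (0 : ℝ)) x :=
    (hasDerivAt_id x).prodMk ((hasDerivAt_const x y).prodMk (hasDerivAt_const x t))
  have h3 := HasFDerivAt.comp_hasDerivAt (l := fun p : ℝ × ℝ × ℝ => u p.1 p.2.1 p.2.2) x h1 h2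
  exact (hasDerivAt_pdx hu x y t).unique h3

lemma pdy_eq_fderiv (hu : ContDiff ℝ (⊤ : ℕ∞) (fun p : ℝ × ℝ × ℝ => u p.1 p.2.1 p.2.2))
    (p : ℝ × ℝ × ℝ) : pdy u p.1 p.2.1 p.2.2
      = fderiv ℝ (fun p : ℝ × ℝ × ℝ => u p.1 p.2.1 p.2.2) p (0, 1, 0) := by
  obtain ⟨x, y, t⟩ := p
  have h1 := (hu.differentiable (by simp) (x, y, t)).hasFDerivAt
  have h2 : HasDerivAt (fun s : ℝ => (x, s, t)) ((0 : ℝ), (1 : ℝ), (0 : ℝ)) y :=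
    (hasDerivAt_const y x).prodMk ((hasDerivAt_id y).prodMk (hasDerivAt_const y t))
  have h3 := HasFDerivAt.comp_hasDerivAt (l := fun p : ℝ × ℝ × ℝ => u p.1 p.2.1 p.2.2) y h1 h2
  exact (hasDerivAt_pdy hu x y t).unique h3

lemma pdt_eq_fderiv (hu : ContDiff ℝ (⊤ : ℕ∞) (fun p : ℝ × ℝ × ℝ => u p.1 p.2.1 p.2.2))
    (p : ℝ × ℝ × ℝ) : pdt u p.1 p.2.1 p.2.2
      = fderiv ℝ (fun p : ℝ × ℝ × ℝ => u p.1 p.2.1 p.2.2) p (0, 0, 1) := by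
  obtain ⟨x, y, t⟩ := p
  have h1 := (hu.differentiable (by simp) (x, y, t)).hasFDerivAt
  have h2 : HasDerivAt (fun s : ℝ => (x, y, s)) ((0 : ℝ), (0 : ℝ), (1 : ℝ)) t :=
    (hasDerivAt_const t x).prodMk ((hasDerivAt_const t y).prodMk (hasDerivAt_id t))
  have h3 := HasFDerivAt.comp_hasDerivAt (l := fun p : ℝ × ℝ × ℝ => u p.1 p.2.1 p.2.2) t h1 h2
  exact (hasDerivAt_pdt hu x y t).unique h3

lemma contDiff_fderiv_apply {F : ℝ × ℝ × ℝ → ℝ} (hF : ContDiff ℝ (⊤ : ℕ∞) F) (e : ℝ × ℝ × ℝ) :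
    ContDiff ℝ (⊤ : ℕ∞) (fun p => fderiv ℝ F p e) :=
  (hF.fderiv_right (m := (⊤ : ℕ∞)) (by simp)).clm_apply contDiff_const

lemma contDiff_pdx (hu : ContDiff ℝ (⊤ : ℕ∞) (fun p : ℝ × ℝ × ℝ => u p.1 p.2.1 p.2.2)) :
    ContDiff ℝ (⊤ : ℕ∞) (fun p : ℝ × ℝ × ℝ => pdx u p.1 p.2.1 p.2.2) := by
  simpa only [pdx_eq_fderiv hu] using contDiff_fderiv_apply hu _

lemma contDiff_pdy (hu : ContDiff ℝ (⊤ : ℕ∞) (fun p : ℝ × ℝ × ℝ => u p.1 p.2.1 p.2.2)) :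
    ContDiff ℝ (⊤ : ℕ∞) (fun p : ℝ × ℝ × ℝ => pdy u p.1 p.2.1 p.2.2) := by
  simpa only [pdy_eq_fderiv hu] using contDiff_fderiv_apply hu _

lemma contDiff_pdt (hu : ContDiff ℝ (⊤ : ℕ∞) (fun p : ℝ × ℝ × ℝ => u p.1 p.2.1 p.2.2)) :
    ContDiff ℝ (⊤ : ℕ∞) (fun p : ℝ × ℝ × ℝ => pdt u p.1 p.2.1 p.2.2) := by
  simpa only [pdt_eq_fderiv hu] using contDiff_fderiv_apply hu _

lemma pdy_pdx_comm (hu : ContDiff ℝ (⊤ : ℕ∞) (fun p : ℝ × ℝ × ℝ => u p.1 p.2.1 p.2.2))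
    (x y t : ℝ) : pdy (pdx u) x y t = pdx (pdy u) x y t := by
  have hd : DifferentiableAt ℝ (fderiv ℝ (fun p : ℝ × ℝ × ℝ => u p.1 p.2.1 p.2.2)) (x, y, t) :=
    (hu.fderiv_right (m := (⊤ : ℕ∞)) (by simp)).differentiable (by simp) _
  have h1 := pdy_eq_fderiv (contDiff_pdx hu) (x, y, t)
  have h2 := pdx_eq_fderiv (contDiff_pdy hu) (x, y, t)
  simp only [pdx_eq_fderiv hu] at h1
  simp only [pdy_eq_fderiv hu] at h2
  rw [fderiv_clm_apply hd (differentiableAt_const _)] at h1 h2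
  have hs : IsSymmSndFDerivAt ℝ (fun p : ℝ × ℝ × ℝ => u p.1 p.2.1 p.2.2) (x, y, t) :=
    hu.contDiffAt.isSymmSndFDerivAt (by simpa using WithTop.coe_le_coe.2 (le_top (a := (2 : ℕ∞))))
  refine h1.trans (Eq.trans ?_ h2.symm)
  simpa using hs.eq _ _

end Smooth

/-! ### The energy inequality -/

/-- The energy inequality at a fixed time for the weight `1 + κ x`, where `v` is the solution at
that time. The quantity `2 (1 + κ x) v (v_x + v² v_x + v_xxx + v_xyy)` differs from
`κ (3 v_x² + v_y² - v² - v⁴ / 2)` by a divergence, whose boundary terms vanish except for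
the one carrying `v_x (0, y)²`, which has a favourable sign. -/
lemma energy_slice {L c d κ : ℝ} (hL : 0 < L) (hcd : c ≤ d)
    {v vt vx vy vxx vxy vxxx vxyy : ℝ × ℝ → ℝ}
    (cv : Continuous v) (cvt : Continuous vt) (cvx : Continuous vx) (cvy : Continuous vy)
    (cvxx : Continuous vxx) (cvxy : Continuous vxy) (cvxxx : Continuous vxxx)
    (cvxyy : Continuous vxyy)
    (hx : ∀ x y, HasDerivAt (fun s => v (s, y)) (vx (x, y)) x)
    (hy : ∀ x y, HasDerivAt (fun s => v (x, s)) (vy (x, y)) y)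
    (hxx : ∀ x y, HasDerivAt (fun s => vx (s, y)) (vxx (x, y)) x)
    (hxxx : ∀ x y, HasDerivAt (fun s => vxx (s, y)) (vxxx (x, y)) x)
    (hyx : ∀ x y, HasDerivAt (fun s => vy (s, y)) (vxy (x, y)) x)
    (hxyy : ∀ x y, HasDerivAt (fun s => vxy (x, s)) (vxyy (x, y)) y)
    (heq : ∀ x ∈ Ioo 0 L, ∀ y ∈ Ioo c d,
      vt (x, y) + vx (x, y) + v (x, y) ^ 2 * vx (x, y) + vxxx (x, y) + vxyy (x, y) = 0)
    (hbY : ∀ x ∈ Ioo 0 L, v (x, c) = 0 ∧ v (x, d) = 0)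
    (hbX : ∀ y ∈ Ioo c d, v (0, y) = 0 ∧ v (L, y) = 0 ∧ vx (L, y) = 0) :
    rectInt 0 L c d (fun p => 2 * (1 + κ * p.1) * v p * vt p) ≤
      κ * (rectInt 0 L c d (fun p => v p ^ 2) + 1 / 2 * rectInt 0 L c d (fun p => v p ^ 4)
        - 3 * rectInt 0 L c d (fun p => vx p ^ 2) - rectInt 0 L c d (fun p => vy p ^ 2)) := by
  have hvy : ∀ y ∈ Ioo c d, ∀ x, (∀ y ∈ Ioo c d, v (x, y) = 0) → vy (x, y) = 0 := by
    intro y hy' x hz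
    refine (hy x y).unique ((hasDerivAt_const y (0 : ℝ)).congr_of_eventuallyEq ?_)
    filter_upwards [Ioo_mem_nhds hy'.1 hy'.2] with s hs using hz s hs
  set P : ℝ × ℝ → ℝ := fun p => (1 + κ * p.1) *
    (v p ^ 2 + v p ^ 4 / 2 + 2 * (v p * vxx p) - vx p ^ 2 - vy p ^ 2) - 2 * κ * (v p * vx p)
    with hP
  set P' : ℝ × ℝ → ℝ := fun p =>
    κ * (v p ^ 2 + v p ^ 4 / 2 + 2 * (v p * vxx p) - vx p ^ 2 - vy p ^ 2)
    + (1 + κ * p.1) * (2 * v p * vx p + 2 * v p ^ 3 * vx p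
      + 2 * (vx p * vxx p + v p * vxxx p) - 2 * vx p * vxx p - 2 * vy p * vxy p)
    - 2 * κ * (vx p * vx p + v p * vxx p) with hP'
  set Q : ℝ × ℝ → ℝ := fun p => 2 * (1 + κ * p.1) * (v p * vxy p) with hQ
  set Q' : ℝ × ℝ → ℝ := fun p => 2 * (1 + κ * p.1) * (vy p * vxy p + v p * vxyy p) with hQ'
  have cP' : Continuous P' := by fun_prop
  have cQ' : Continuous Q' := by fun_prop
  have dP : ∀ x y, HasDerivAt (fun s => P (s, y)) (P' (x, y)) x := by
    intro x y
    have hw : HasDerivAt (fun s : ℝ => 1 + κ * s) κ x := by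
      simpa using ((hasDerivAt_id x).const_mul κ).const_add 1
    have h1 := (((((hx x y).pow 2).add (((hx x y).pow 4).div_const 2)).add
      (((hx x y).mul (hxxx x y)).const_mul 2)).sub ((hxx x y).pow 2)).sub
      ((hyx x y).pow 2)
    refine ((hw.mul h1).sub (((hx x y).mul (hxx x y)).const_mul (2 * κ))).congr_deriv ?_
    simp only [hP', Pi.add_apply, Pi.sub_apply, Pi.pow_apply, Pi.mul_apply, Nat.cast_ofNat,
      Nat.reduceSub]
    ring
  have dQ : ∀ x y, HasDerivAt (fun s => Q (x, s)) (Q' (x, y)) y := fun x y =>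
    ((hy x y).mul (hxyy x y)).const_mul (2 * (1 + κ * x))
  have iP : 0 ≤ rectInt 0 L c d P' := by
    rw [rectInt_deriv_fst 0 L c d cP' dP]
    have h0 : ∫ _ in c..d, (0 : ℝ) = 0 := by simp
    rw [← h0]
    refine intervalIntegral.integral_mono_on_of_le_Ioo hcd intervalIntegrable_const
      (Continuous.intervalIntegrable (by fun_prop) _ _) fun y hy' => ?_
    obtain ⟨b0, bL, bxL⟩ := hbX y hy'
    have e0 := hvy y hy' 0 fun y h => (hbX y h).1
    have eL := hvy y hy' L fun y h => (hbX y h).2.1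
    simp [hP, b0, bL, bxL, e0, eL]
    positivity
  have iQ : rectInt 0 L c d Q' = 0 := by
    rw [rectInt_deriv_snd 0 L c d cQ' dQ]
    have h0 : ∫ _ in (0 : ℝ)..L, (0 : ℝ) = 0 := by simp
    refine Eq.trans ?_ h0
    have hc : Continuous fun x => Q (x, d) - Q (x, c) := by fun_prop
    have hz : ∀ x ∈ Ioo 0 L, Q (x, d) - Q (x, c) = 0 := fun x hx' => by simp [hQ, hbY x hx']
    exact le_antisymm
      (intervalIntegral.integral_mono_on_of_le_Ioo hL.le (hc.intervalIntegrable _ _)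
        intervalIntegrable_const fun x hx' => (hz x hx').le)
      (intervalIntegral.integral_mono_on_of_le_Ioo hL.le intervalIntegrable_const
        (hc.intervalIntegrable _ _) fun x hx' => (hz x hx').ge)
  have key : rectInt 0 L c d (fun p => (2 * (1 + κ * p.1) * v p * vt p + (P' p + Q' p))
        + κ * (3 * vx p ^ 2 + vy p ^ 2)) =
      rectInt 0 L c d (fun p => κ * (v p ^ 2 + 1 / 2 * v p ^ 4)) := by
    refine rectInt_congr hL.le hcd (by fun_prop) (by fun_prop) fun x hx' y hy' => ?_
    have := heq x hx' y hy'
    have ht : vt (x, y) = -(vx (x, y) + v (x, y) ^ 2 * vx (x, y) + vxxx (x, y) + vxyy (x, y)) := by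
      linarith
    simp only [hP', hQ', ht]
    ring
  rw [rectInt_add (f := fun p => 2 * (1 + κ * p.1) * v p * vt p + (P' p + Q' p))
      (g := fun p => κ * (3 * vx p ^ 2 + vy p ^ 2)) _ _ _ _ (by fun_prop) (by fun_prop),
    rectInt_add (f := fun p => 2 * (1 + κ * p.1) * v p * vt p)
      (g := fun p => P' p + Q' p) _ _ _ _ (by fun_prop) (by fun_prop),
    rectInt_add _ _ _ _ cP' cQ',
    rectInt_const_mul _ _ _ _ _ (fun p => 3 * vx p ^ 2 + vy p ^ 2),
    rectInt_add (f := fun p => 3 * vx p ^ 2)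
      (g := fun p => vy p ^ 2) _ _ _ _ (by fun_prop) (by fun_prop),
    rectInt_const_mul _ _ _ _ _ (fun p => vx p ^ 2),
    rectInt_const_mul _ _ _ _ _ (fun p => v p ^ 2 + 1 / 2 * v p ^ 4),
    rectInt_add (f := fun p => v p ^ 2)
      (g := fun p => 1 / 2 * v p ^ 4) _ _ _ _ (by fun_prop) (by fun_prop),
    rectInt_const_mul _ _ _ _ _ (fun p => v p ^ 4), iQ] at key
  linarith

/-- The coercivity estimate: small `L²` mass `M` lets the dissipation `3X + Y` absorb
the terms `M` and `Q / 2`, where `a` and `b` are the Steklov constants. -/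
lemma dissipation_bound {A a b N M X Y Q : ℝ} (ha : 0 < a) (hb : 0 < b) (hM : 0 ≤ M)
    (hX0 : 0 ≤ X) (hY0 : 0 ≤ Y)
    (hA : 2 * A ^ 2 = 3 * a + b - 1) (hN : N * (2 * (a + b)) < A ^ 2) (hMN : M ≤ N)
    (hX : a * M ≤ X) (hY : b * M ≤ Y) (hQ : Q ≤ 2 * M * (X + Y)) :
    M + 1 / 2 * Q - 3 * X - Y ≤ -(A ^ 2 * M) := by
  have hN1 : N < 1 := by
    by_contra! h
    nlinarith
  have h1 : M * (X + Y) ≤ N * (X + Y) := mul_le_mul_of_nonneg_right hMN (by linarith)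
  have h2 : (3 - N) * (a * M) ≤ (3 - N) * X := mul_le_mul_of_nonneg_left hX (by linarith)
  have h3 : (1 - N) * (b * M) ≤ (1 - N) * Y := mul_le_mul_of_nonneg_left hY (by linarith)
  have h4 : N * (2 * (a + b)) * M ≤ A ^ 2 * M := mul_le_mul_of_nonneg_right hN.le hM
  have h5 : 2 * A ^ 2 * M = (3 * a + b - 1) * M := by rw [hA]
  nlinarith [mul_nonneg (sq_nonneg A) hM]

/-- Gronwall's lemma in the form used here. -/
lemma gronwall_decay {E E' : ℝ → ℝ} {k : ℝ} (hE : ∀ t, HasDerivAt E (E' t) t)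
    (h : ∀ t, 0 < t → E' t ≤ -k * E t) {t : ℝ} (ht : 0 ≤ t) :
    E t ≤ exp (-k * t) * E 0 := by
  have hd : ∀ t, HasDerivAt (fun t => exp (k * t) * E t)
      (exp (k * t) * k * E t + exp (k * t) * E' t) t := fun t =>
    (((hasDerivAt_id t).const_mul k).exp.congr_deriv (by simp)).mul (hE t)
  have hanti : AntitoneOn (fun t => exp (k * t) * E t) (Ici 0) := by
    apply antitoneOn_of_deriv_nonpos (convex_Ici 0)
    · exact fun t _ => (hd t).continuousAt.continuousWithinAt
    · exact fun t _ => (hd t).differentiableAt.differentiableWithinAt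
    · intro t ht
      rw [interior_Ici] at ht
      rw [(hd t).deriv]
      have := mul_le_mul_of_nonneg_left (h t ht) (exp_pos (k * t)).le
      linarith
  have h0 := hanti (mem_Ici.2 le_rfl) (mem_Ici.2 ht) ht
  simp only [mul_zero, exp_zero, one_mul] at h0
  calc E t = exp (-k * t) * (exp (k * t) * E t) := by
        rw [← mul_assoc, ← exp_add]; simp
    _ ≤ _ := mul_le_mul_of_nonneg_left h0 (exp_pos _).le

/-- Exponential decay for the modified Zakharov–Kuznetsov equation on
`Ω = (0,L) × (-B,B)`: if `2A² = π²(3/L² + 1/(4B²)) − 1 > 0` and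
`∫_Ω u²(0) < A²/(2π²(1/L² + 1/(4B²)))`, then for every `t ≥ 0`
`∫_Ω u²(t) ≤ ∫_Ω (1+x)u²(t) ≤ e^{−(A²/(1+L))t} ∫_Ω (1+x)u²(0)`. -/
theorem mZK_exponential_decay
    (L B A : ℝ) (hL : 0 < L) (hB : 0 < B)
    (hA : 2 * A ^ 2 = Real.pi ^ 2 * (3 / L ^ 2 + 1 / (4 * B ^ 2)) - 1)
    (hApos : 0 < 2 * A ^ 2)
    (u : ℝ → ℝ → ℝ → ℝ)
    (hu : ContDiff ℝ (⊤ : ℕ∞) (fun p : ℝ × ℝ × ℝ => u p.1 p.2.1 p.2.2))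
    (heq : ∀ x ∈ Set.Ioo (0 : ℝ) L, ∀ y ∈ Set.Ioo (-B) B, ∀ t : ℝ, 0 < t →
      pdt u x y t + pdx u x y t + (u x y t) ^ 2 * pdx u x y t
        + pdx (pdx (pdx u)) x y t + pdy (pdy (pdx u)) x y t = 0)
    (hbcY : ∀ x ∈ Set.Ioo (0 : ℝ) L, ∀ t : ℝ, 0 ≤ t →
      u x (-B) t = 0 ∧ u x B t = 0)
    (hbcX : ∀ y ∈ Set.Ioo (-B) B, ∀ t : ℝ, 0 ≤ t →
      u 0 y t = 0 ∧ u L y t = 0 ∧ pdx u L y t = 0)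
    (hsmall : (∫ x in (0:ℝ)..L, ∫ y in (-B)..B, (u x y 0) ^ 2)
      < A ^ 2 / (2 * Real.pi ^ 2 * (1 / L ^ 2 + 1 / (4 * B ^ 2)))) :
    ∀ t : ℝ, 0 ≤ t →
      (∫ x in (0:ℝ)..L, ∫ y in (-B)..B, (u x y t) ^ 2)
        ≤ (∫ x in (0:ℝ)..L, ∫ y in (-B)..B, (1 + x) * (u x y t) ^ 2)
      ∧ (∫ x in (0:ℝ)..L, ∫ y in (-B)..B, (1 + x) * (u x y t) ^ 2)
        ≤ Real.exp (-(A ^ 2 / (1 + L)) * t) *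
            ∫ x in (0:ℝ)..L, ∫ y in (-B)..B, (1 + x) * (u x y 0) ^ 2 := by
  have hu1 := contDiff_pdx hu
  have hu2 := contDiff_pdx hu1
  have hu3 := contDiff_pdx hu2
  have huy := contDiff_pdy hu
  have huxy := contDiff_pdy hu1
  have huxyy := contDiff_pdy huxy
  have hut := contDiff_pdt hu
  have sl : ∀ {w : ℝ → ℝ → ℝ → ℝ},
      ContDiff ℝ (⊤ : ℕ∞) (fun p : ℝ × ℝ × ℝ => w p.1 p.2.1 p.2.2) → ∀ t,
      Continuous fun p : ℝ × ℝ => w p.1 p.2 t := fun hw t =>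
    hw.continuous.comp (f := fun p : ℝ × ℝ => (p.1, p.2, t)) (by fun_prop)
  have hBB : -B < B := by linarith
  -- `E κ` is the energy with weight `1 + κ x`
  set E : ℝ → ℝ → ℝ := fun κ t =>
    rectInt 0 L (-B) B fun p => (1 + κ * p.1) * u p.1 p.2 t ^ 2 with hE
  set E' : ℝ → ℝ → ℝ := fun κ t =>
    rectInt 0 L (-B) B fun p => 2 * (1 + κ * p.1) * u p.1 p.2 t * pdt u p.1 p.2 t with hE'
  have cu := hu.continuous
  have cut := hut.continuous
  have dE : ∀ κ t, HasDerivAt (E κ) (E' κ t) t := fun κ t =>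
    hasDerivAt_rectInt (f := fun q => (1 + κ * q.1) * u q.1 q.2.1 q.2.2 ^ 2)
      (f' := fun q => 2 * (1 + κ * q.1) * u q.1 q.2.1 q.2.2 * pdt u q.1 q.2.1 q.2.2)
      (Continuous.mul (by fun_prop) (cu.pow 2))
      (Continuous.mul (Continuous.mul (by fun_prop) cu) cut)
      (fun x y t => (((hasDerivAt_pdt hu x y t).pow 2).const_mul (1 + κ * x)).congr_deriv
        (by simp; ring)) 0 L (-B) B t
  set X : ℝ → ℝ := fun t => rectInt 0 L (-B) B fun p => pdx u p.1 p.2 t ^ 2 with hX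
  set Y : ℝ → ℝ := fun t => rectInt 0 L (-B) B fun p => pdy u p.1 p.2 t ^ 2 with hY
  set Q : ℝ → ℝ := fun t => rectInt 0 L (-B) B fun p => u p.1 p.2 t ^ 4 with hQ
  set M : ℝ → ℝ := fun t => rectInt 0 L (-B) B fun p => u p.1 p.2 t ^ 2 with hM
  have hM0 : E 0 = M := by
    ext t
    simp [hE, hM]
  have energy : ∀ κ t, 0 < t → E' κ t ≤ κ * (M t + 1 / 2 * Q t - 3 * X t - Y t) := by
    intro κ t ht
    refine energy_slice (v := fun p => u p.1 p.2 t) (vt := fun p => pdt u p.1 p.2 t)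
      (vx := fun p => pdx u p.1 p.2 t) (vy := fun p => pdy u p.1 p.2 t)
      (vxx := fun p => pdx (pdx u) p.1 p.2 t) (vxy := fun p => pdy (pdx u) p.1 p.2 t)
      (vxxx := fun p => pdx (pdx (pdx u)) p.1 p.2 t)
      (vxyy := fun p => pdy (pdy (pdx u)) p.1 p.2 t) hL hBB.le (sl hu t) (sl hut t) (sl hu1 t)
      (sl huy t) (sl hu2 t) (sl huxy t) (sl hu3 t) (sl huxyy t)
      (fun x y => hasDerivAt_pdx hu x y t) (fun x y => hasDerivAt_pdy hu x y t)
      (fun x y => hasDerivAt_pdx hu1 x y t) (fun x y => hasDerivAt_pdx hu2 x y t)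
      (fun x y => ?_) (fun x y => hasDerivAt_pdy huxy x y t)
      (fun x hx y hy => heq x hx y hy t ht) (fun x hx => hbcY x hx t ht.le)
      (fun y hy => hbcX y hy t ht.le)
    have := hasDerivAt_pdx huy x y t
    rwa [← pdy_pdx_comm hu] at this
  have mass : ∀ t, 0 ≤ t → M t ≤ M 0 := by
    intro t ht
    have := gronwall_decay (k := 0) (dE 0) (fun s hs => by simpa using energy 0 s hs) ht
    simpa [hM0] using this
  have mono : ∀ t, M t ≤ E 1 t := fun t => by
    have cs := sl hu t
    refine rectInt_mono hL.le hBB.le (cs.pow 2) (Continuous.mul (by fun_prop) (cs.pow 2))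
      fun x hx y _ => ?_
    nlinarith [mul_nonneg hx.1.le (sq_nonneg (u x y t))]
  have upper : ∀ t, E 1 t ≤ (1 + L) * M t := fun t => by
    have cs := sl hu t
    rw [hM, ← rectInt_const_mul]
    refine rectInt_mono hL.le hBB.le (Continuous.mul (by fun_prop) (cs.pow 2))
      (Continuous.mul (by fun_prop) (cs.pow 2)) fun x hx y _ => ?_
    nlinarith [mul_nonneg (sub_nonneg.2 hx.2.le) (sq_nonneg (u x y t))]
  have diss : ∀ t, 0 < t → E' 1 t ≤ -(A ^ 2 / (1 + L)) * E 1 t := by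
    intro t ht
    have hXM : π ^ 2 / L ^ 2 * M t ≤ X t := by
      have := steklov_fst hL hBB.le (sl hu t) (sl hu1 t) (fun x y => hasDerivAt_pdx hu x y t)
        (fun y hy => ⟨(hbcX y hy t ht.le).1, (hbcX y hy t ht.le).2.1⟩)
      rwa [sub_zero] at this
    have hYM : π ^ 2 / (4 * B ^ 2) * M t ≤ Y t := by
      have := steklov_snd hL.le hBB (sl hu t) (sl huy t) (fun x y => hasDerivAt_pdy hu x y t)
        (fun x hx => hbcY x hx t ht.le)
      rwa [show (B - -B) ^ 2 = 4 * B ^ 2 by ring] at this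
    have hQM : Q t ≤ 2 * M t * (X t + Y t) :=
      nirenberg hL.le hBB.le (sl hu t) (sl hu1 t) (sl huy t)
        (fun x y => hasDerivAt_pdx hu x y t) (fun x y => hasDerivAt_pdy hu x y t)
        (fun y hy => (hbcX y hy t ht.le).1) (fun x hx => (hbcY x hx t ht.le).1)
    have hN : M 0 * (2 * (π ^ 2 / L ^ 2 + π ^ 2 / (4 * B ^ 2))) < A ^ 2 := by
      have hs := (lt_div_iff₀ (by positivity)).1 hsmall
      have e : 2 * (π ^ 2 / L ^ 2 + π ^ 2 / (4 * B ^ 2))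
          = 2 * π ^ 2 * (1 / L ^ 2 + 1 / (4 * B ^ 2)) := by ring
      rw [e]
      exact hs
    have hd := dissipation_bound (A := A) (a := π ^ 2 / L ^ 2) (b := π ^ 2 / (4 * B ^ 2))
      (by positivity) (by positivity) (rectInt_nonneg hL.le hBB.le fun p => sq_nonneg _)
      (rectInt_nonneg hL.le hBB.le fun p => sq_nonneg _)
      (rectInt_nonneg hL.le hBB.le fun p => sq_nonneg _) (by rw [hA]; ring) hN (mass t ht.le)
      hXM hYM hQM
    have he := energy 1 t ht
    have hk : A ^ 2 / (1 + L) * E 1 t ≤ A ^ 2 * M t := by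
      have := mul_le_mul_of_nonneg_left (upper t) (show 0 ≤ A ^ 2 / (1 + L) by positivity)
      calc _ ≤ _ := this
        _ = _ := by field_simp
    linarith
  intro t ht
  have hE1 : ∀ t, E 1 t = ∫ x in (0:ℝ)..L, ∫ y in (-B)..B, (1 + x) * (u x y t) ^ 2 := fun t => by
    simp only [hE, rectInt, one_mul]
  rw [← hE1 t, ← hE1 0]
  exact ⟨mono t, gronwall_decay (dE 1) diss ht⟩
end

section
/- Let U be a real Banach space, p ≥ 1 and L > 0. There exists a constant C > 0, depending only on p and L, such that for every ε ∈ (0,1] and every four times continuously differentiable function u : [0,L] → U satisfying the boundary conditions u(0) = u(L) = u'(L) = u''(0) = 0, one has sup_{x∈[0,L]} ‖u''(x)‖_U ≤ C ‖u''' + ε u''''‖_{L^p(0,L;U)}. In particular, if a family (u_ε)_{ε∈(0,1]} of such functions satisfies u_ε''' + ε u_ε'''' = g_ε with (g_ε) bounded in L^p(0,L;U), then (u_ε'') is bounded in L^∞(0,L;U) uniformly as ε → 0 (and consequently so are (u_ε') and (u_ε)). -/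
/-!
Put `v = u''`, `F = v + ε v'` and `c = F 0`, so that `F' = u''' + ε u'''' =: g`.  Then
`‖F - c‖ ≤ M := ∫₀ᴸ ‖g‖`, and solving the first-order equation `v + ε v' = F` with `v 0 = 0` gives
`‖v x - (1 - e^{-x/ε}) c‖ ≤ M` (`norm_sub_le_of_first_order`): only the boundary-layer
amplitude `c` is left to control.  The remaining three boundary conditions say
`∫₀ᴸ x v(x) dx = 0` (`integral_id_smul_second_deriv`), and testing the previous estimate against
the weight `x` yields `‖c‖ ∫₀ᴸ x (1 - e^{-x/ε}) dx ≤ M L² / 2`.  Since `ε ≤ 1`, the integral on the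
left is at least `∫₀ᴸ x (1 - e^{-x}) dx > 0`, which does not depend on `ε`.  Finally `M` is bounded
by the `L^p` norm of `g` through Jensen's inequality (`integral_norm_le_Lp`).
-/

open MeasureTheory Real Set

/-- The embedding `L^p ⊆ L^1` on `[0, L]` for continuous functions, by Jensen's inequality. -/
lemma integral_norm_le_Lp {U : Type*} [NormedAddCommGroup U] {p L : ℝ} (hp : 1 ≤ p) (hL : 0 < L)
    {g : ℝ → U} (hg : Continuous g) :
    ∫ x in (0:ℝ)..L, ‖g x‖ ≤ L * (L⁻¹) ^ (1 / p) * (∫ x in (0:ℝ)..L, ‖g x‖ ^ p) ^ (1 / p) := by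
  have hp0 : 0 < p := by linarith
  have hgp : Continuous fun x => ‖g x‖ ^ p := hg.norm.rpow_const fun _ => Or.inr hp0.le
  have J := (convexOn_rpow hp).map_set_average_le (μ := volume) (t := Set.Ioc 0 L)
    (f := fun x => ‖g x‖)
    (continuousOn_id.rpow_const fun _ _ => Or.inr hp0.le) isClosed_Ici
    (by simp [hL]) (by simp) (Filter.Eventually.of_forall fun x => norm_nonneg _)
    ((intervalIntegrable_iff_integrableOn_Ioc_of_le hL.le).1 (hg.norm.intervalIntegrable 0 L))
    ((intervalIntegrable_iff_integrableOn_Ioc_of_le hL.le).1 (hgp.intervalIntegrable 0 L))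
  have hI : 0 ≤ ∫ x in (0:ℝ)..L, ‖g x‖ :=
    intervalIntegral.integral_nonneg hL.le fun _ _ => norm_nonneg _
  have hIp : 0 ≤ ∫ x in (0:ℝ)..L, ‖g x‖ ^ p :=
    intervalIntegral.integral_nonneg hL.le fun _ _ => by positivity
  simp only [setAverage_eq, ← intervalIntegral.integral_of_le hL.le, Real.volume_real_Ioc_of_le hL.le,
    sub_zero, smul_eq_mul] at J
  have hroot : L⁻¹ * (∫ x in (0:ℝ)..L, ‖g x‖) ≤ (L⁻¹ * ∫ x in (0:ℝ)..L, ‖g x‖ ^ p) ^ (1 / p) := by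
    rw [one_div]
    exact (Real.le_rpow_inv_iff_of_pos (by positivity) (by positivity) hp0).2 J
  rw [Real.mul_rpow (by positivity) hIp] at hroot
  calc ∫ x in (0:ℝ)..L, ‖g x‖ = L * (L⁻¹ * ∫ x in (0:ℝ)..L, ‖g x‖) := by field_simp
    _ ≤ L * ((L⁻¹) ^ (1 / p) * (∫ x in (0:ℝ)..L, ‖g x‖ ^ p) ^ (1 / p)) := by gcongr
    _ = _ := by ring

/-- Up to the explicit boundary layer `(1 - e^{-x/ε}) c`, a solution of `v + ε v' = F` with
`v 0 = 0` is controlled by `sup ‖F - c‖`, uniformly in `ε`. -/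
lemma norm_sub_le_of_first_order {U : Type*} [NormedAddCommGroup U] [NormedSpace ℝ U]
    {L ε M : ℝ} (hε : 0 < ε) (hM : 0 ≤ M) {v v' : ℝ → U} (hv : ∀ x, HasDerivAt v (v' x) x)
    (hv0 : v 0 = 0) {c : U} (hF : ∀ x ∈ Set.Icc 0 L, ‖v x + ε • v' x - c‖ ≤ M) :
    ∀ x ∈ Set.Icc 0 L, ‖v x - (1 - exp (-(x / ε))) • c‖ ≤ M := by
  have hexp : ∀ x : ℝ, HasDerivAt (fun x => exp (x / ε)) (exp (x / ε) / ε) x := fun x => by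
    simpa [div_eq_mul_inv] using ((hasDerivAt_id x).div_const ε).exp
  -- The equation multiplied by its integrating factor `e^{x/ε}`.
  have hf : ∀ x, HasDerivAt (fun x => exp (x / ε) • v x - (exp (x / ε) - 1) • c)
      ((exp (x / ε) / ε) • (v x + ε • v' x - c)) x := fun x => by
    refine (((hexp x).smul (hv x)).sub (((hexp x).sub_const 1).smul_const c)).congr_deriv ?_
    simp only [smul_sub, smul_add, smul_smul, div_mul_cancel₀ _ hε.ne']
    abel
  have hB : ∀ x, HasDerivAt (fun x => M * (exp (x / ε) - 1)) (M * (exp (x / ε) / ε)) x :=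
    fun x => ((hexp x).sub_const 1).const_mul M
  intro x hx
  have key := image_norm_le_of_norm_deriv_right_le_deriv_boundary
    (f := fun x => exp (x / ε) • v x - (exp (x / ε) - 1) • c) (a := 0) (b := L)
    (B := fun x => M * (exp (x / ε) - 1))
    (fun y _ => (hf y).continuousAt.continuousWithinAt)
    (fun y _ => (hf y).hasDerivWithinAt) (by simp [hv0]) hB
    (fun y hy => by
      rw [norm_smul, Real.norm_of_nonneg (by positivity), mul_comm]
      gcongr
      exact hF y ⟨hy.1, hy.2.le⟩) hx
  have hid : v x - (1 - exp (-(x / ε))) • c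
      = exp (-(x / ε)) • (exp (x / ε) • v x - (exp (x / ε) - 1) • c) := by
    simp only [smul_sub, smul_smul, ← exp_add, mul_sub, neg_add_cancel, exp_zero, mul_one,
      one_smul]
  rw [hid, norm_smul, Real.norm_of_nonneg (exp_pos _).le]
  calc exp (-(x / ε)) * _ ≤ exp (-(x / ε)) * (M * (exp (x / ε) - 1)) := by gcongr
    _ = M * (exp (-(x / ε)) * exp (x / ε) - exp (-(x / ε))) := by ring
    _ = M * (1 - exp (-(x / ε))) := by rw [← exp_add, neg_add_cancel, exp_zero]
    _ ≤ M := mul_le_of_le_one_right hM (by linarith [exp_pos (-(x / ε))])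

/-- The conditions `u 0 = u L = u' L = 0` as orthogonality of `u''` to the weight `x`; the
integrand has primitive `x u' - u`. -/
lemma integral_id_smul_second_deriv {U : Type*} [NormedAddCommGroup U] [NormedSpace ℝ U]
    [CompleteSpace U] {L : ℝ} {u u' v : ℝ → U} (hu : ∀ x, HasDerivAt u (u' x) x)
    (hu' : ∀ x, HasDerivAt u' (v x) x) (hv : Continuous v)
    (h0 : u 0 = 0) (hL : u L = 0) (hL' : u' L = 0) : ∫ x in (0:ℝ)..L, x • v x = 0 := by
  have h : ∀ x, HasDerivAt (fun x => x • u' x - u x) (x • v x) x := fun x => by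
    refine (((hasDerivAt_id x).smul (hu' x)).sub (hu x)).congr_deriv ?_
    simp
  rw [intervalIntegral.integral_eq_sub_of_hasDerivAt (fun x _ => h x)
    ((continuous_id.smul hv).intervalIntegrable _ _)]
  simp [h0, hL, hL']

lemma weight_integral_pos {L : ℝ} (hL : 0 < L) : 0 < ∫ x in (0:ℝ)..L, x * (1 - exp (-x)) := by
  refine intervalIntegral.intervalIntegral_pos_of_pos_on
    (Continuous.intervalIntegrable (by fun_prop) _ _) (fun x hx => ?_) hL
  have : exp (-x) < 1 := by rw [exp_lt_one_iff]; linarith [hx.1]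
  exact mul_pos hx.1 (by linarith)

/-- The amplitude `c` of the boundary layer is bounded uniformly in `ε ≤ 1` when `v` is
orthogonal to the weight `x`. -/
lemma norm_layer_amplitude_le {U : Type*} [NormedAddCommGroup U] [NormedSpace ℝ U]
    [CompleteSpace U] {L ε M : ℝ} (hL : 0 < L) (hε : 0 < ε) (hε1 : ε ≤ 1) {v : ℝ → U}
    (hv : Continuous v) {c : U} (hint : ∫ x in (0:ℝ)..L, x • v x = 0)
    (hvc : ∀ x ∈ Set.Icc 0 L, ‖v x - (1 - exp (-(x / ε))) • c‖ ≤ M) :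
    ‖c‖ ≤ M * ((L ^ 2 / 2) / ∫ x in (0:ℝ)..L, x * (1 - exp (-x))) := by
  have hm := weight_integral_pos hL
  set m := ∫ x in (0:ℝ)..L, x * (1 - exp (-x))
  have hcont : Continuous fun x => x * (1 - exp (-(x / ε))) := by fun_prop
  have hmono : m ≤ ∫ x in (0:ℝ)..L, x * (1 - exp (-(x / ε))) := by
    refine intervalIntegral.integral_mono_on hL.le
      (Continuous.intervalIntegrable (by fun_prop) _ _) (hcont.intervalIntegrable _ _)
      fun x hx => ?_
    have : x ≤ x / ε := le_div_self hx.1 hε hε1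
    have hx0 := hx.1
    gcongr
  have hsplit : ∫ x in (0:ℝ)..L, x • (v x - (1 - exp (-(x / ε))) • c)
      = -((∫ x in (0:ℝ)..L, x * (1 - exp (-(x / ε)))) • c) := by
    simp only [smul_sub, smul_smul]
    rw [intervalIntegral.integral_sub (Continuous.intervalIntegrable (by fun_prop) _ _)
      (Continuous.intervalIntegrable (by fun_prop) _ _), hint,
      intervalIntegral.integral_smul_const, zero_sub]
  have hbound : ‖∫ x in (0:ℝ)..L, x • (v x - (1 - exp (-(x / ε))) • c)‖
      ≤ ∫ x in (0:ℝ)..L, x * M := by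
    refine intervalIntegral.norm_integral_le_of_norm_le hL.le
      (Filter.Eventually.of_forall fun x hx => ?_)
      (Continuous.intervalIntegrable (by fun_prop) _ _)
    rw [norm_smul, Real.norm_of_nonneg hx.1.le]
    exact mul_le_mul_of_nonneg_left (hvc x ⟨hx.1.le, hx.2⟩) hx.1.le
  rw [hsplit, norm_neg, norm_smul, Real.norm_of_nonneg (hm.le.trans hmono),
    intervalIntegral.integral_mul_const, integral_id] at hbound
  have : ‖c‖ * m ≤ M * (L ^ 2 / 2) := by
    nlinarith [mul_le_mul_of_nonneg_left hmono (norm_nonneg c)]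
  rwa [← mul_div_assoc, le_div_iff₀ hm]

/-- Uniform trace lemma for the vanishing-viscosity third-order operator: for a real
Banach space `U`, `p ≥ 1` and `L > 0`, there is `C = C(p,L) > 0` such that for every
`ε ∈ (0,1]` and every `C⁴` function `u : [0,L] → U` with
`u(0) = u(L) = u'(L) = u''(0) = 0`,
`sup_{x∈[0,L]} ‖u''(x)‖ ≤ C ‖u''' + ε u''''‖_{L^p(0,L;U)}`. -/
theorem uniform_trace_lemma
    (U : Type*) [NormedAddCommGroup U] [NormedSpace ℝ U] [CompleteSpace U]
    (p L : ℝ) (hp : 1 ≤ p) (hL : 0 < L) :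
    ∃ C : ℝ, 0 < C ∧
      ∀ ε ∈ Set.Ioc (0 : ℝ) 1,
        ∀ u : ℝ → U, ContDiff ℝ 4 u →
          u 0 = 0 → u L = 0 → deriv u L = 0 → iteratedDeriv 2 u 0 = 0 →
          ∀ x ∈ Set.Icc (0 : ℝ) L,
            ‖iteratedDeriv 2 u x‖
              ≤ C * (∫ x' in (0:ℝ)..L,
                  ‖iteratedDeriv 3 u x' + ε • iteratedDeriv 4 u x'‖ ^ p) ^ (1 / p) := by
  have hm := weight_integral_pos hL
  set K := (L ^ 2 / 2) / ∫ x in (0:ℝ)..L, x * (1 - exp (-x))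
  have hK : 0 < K := by positivity
  refine ⟨(1 + K) * (L * (L⁻¹) ^ (1 / p)), by positivity, ?_⟩
  rintro ε ⟨hε, hε1⟩ u hu h0 huL huL' hv0 x hx
  have hd : ∀ n : ℕ, n < 4 → ∀ y, HasDerivAt (iteratedDeriv n u) (iteratedDeriv (n + 1) u y) y := by
    intro n hn y
    rw [iteratedDeriv_succ]
    exact (hu.differentiable_iteratedDeriv n (by exact_mod_cast hn) y).hasDerivAt
  have hu1 : ∀ y, HasDerivAt u (deriv u y) y := by simpa using hd 0 (by norm_num)
  have hu2 : ∀ y, HasDerivAt (deriv u) (iteratedDeriv 2 u y) y := by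
    simpa using hd 1 (by norm_num)
  have hu3 := hd 2 (by norm_num)
  have hu4 := hd 3 (by norm_num)
  have hc2 : Continuous (iteratedDeriv 2 u) := hu.continuous_iteratedDeriv 2 (by norm_num)
  have hg : Continuous fun y => iteratedDeriv 3 u y + ε • iteratedDeriv 4 u y :=
    (hu.continuous_iteratedDeriv 3 (by norm_num)).add
      ((hu.continuous_iteratedDeriv 4 (by norm_num)).const_smul ε)
  set M := ∫ y in (0:ℝ)..L, ‖iteratedDeriv 3 u y + ε • iteratedDeriv 4 u y‖ with hMdef
  have hM : 0 ≤ M := intervalIntegral.integral_nonneg hL.le fun _ _ => norm_nonneg _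
  set c := iteratedDeriv 2 u 0 + ε • iteratedDeriv 3 u 0 with hc
  have hF : ∀ y ∈ Set.Icc 0 L, ‖iteratedDeriv 2 u y + ε • iteratedDeriv 3 u y - c‖ ≤ M := by
    intro y hy
    rw [hc, ← intervalIntegral.integral_eq_sub_of_hasDerivAt
      (f := fun y => iteratedDeriv 2 u y + ε • iteratedDeriv 3 u y)
      (fun z _ => (hu3 z).add ((hu4 z).const_smul ε)) (hg.intervalIntegrable _ _)]
    refine (intervalIntegral.norm_integral_le_integral_norm hy.1).trans ?_
    exact intervalIntegral.integral_mono_interval le_rfl hy.1 hy.2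
      (Filter.Eventually.of_forall fun _ => norm_nonneg _) (hg.norm.intervalIntegrable _ _)
  have hvc := norm_sub_le_of_first_order hε hM hu3 hv0 hF
  have hcK : ‖c‖ ≤ M * K := norm_layer_amplitude_le hL hε hε1 hc2
    (integral_id_smul_second_deriv hu1 hu2 hc2 h0 huL huL') hvc
  have hlayer : ‖(1 - exp (-(x / ε))) • c‖ ≤ ‖c‖ := by
    have h1 : exp (-(x / ε)) ≤ 1 := by
      rw [exp_le_one_iff]
      exact neg_nonpos.2 (div_nonneg hx.1 hε.le)
    rw [norm_smul, Real.norm_of_nonneg (by linarith)]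
    exact mul_le_of_le_one_left (norm_nonneg c) (by linarith [exp_pos (-(x / ε))])
  have htri := norm_add_le (iteratedDeriv 2 u x - (1 - exp (-(x / ε))) • c)
    ((1 - exp (-(x / ε))) • c)
  rw [sub_add_cancel] at htri
  calc ‖iteratedDeriv 2 u x‖ ≤ (1 + K) * M := by linarith [hvc x hx]
    _ ≤ (1 + K) * (L * (L⁻¹) ^ (1 / p) * (∫ x' in (0:ℝ)..L,
          ‖iteratedDeriv 3 u x' + ε • iteratedDeriv 4 u x'‖ ^ p) ^ (1 / p)) := by
        gcongr
        exact integral_norm_le_Lp hp hL hg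
    _ = _ := by ring
end
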